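/- Let n ≥ 3 be an integer and set χ = χ_k^{n−2}. Let (L₀, ⟨·,·⟩) be a self-dual positive definite hermitian O_k-lattice of rank n−2, with quadratic form Q(x) = ⟨x,x⟩. Let f ∈ M^{!,∞}_{2−n}(D,χ) have Fourier coefficients c(m), and assume c(m) ∈ ℤ for all m ≤ 0. Then the rational number mult(f) := (1/(n−2))·∑_{m>0} m·c(−m)·#{x ∈ L₀ : Q(x) = m} (a finite sum) is an integer. -/

import Mathlib

/-!
Statement 2 (part of Proposition 5.2.2): for `f ∈ M^{!,∞}_{2-n}(D, χ_k^{n-2})` with integral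
principal part and a self-dual positive definite hermitian `O_k`-lattice `L₀` of rank `n-2`,
the rational number `mult(f) = (1/(n-2)) ∑_{m>0} m c(-m) #{x ∈ L₀ : Q(x) = m}` is an integer.
-/

noncomputable section

/-- The complex upper half plane, as a subset of `ℂ`. -/
def UHP : Set ℂ := {z : ℂ | 0 < z.im}

/-- A `2 × 2` integer matrix viewed as a real matrix. -/
def matR (g : Matrix (Fin 2) (Fin 2) ℤ) : Matrix (Fin 2) (Fin 2) ℝ :=
  g.map fun x => (x : ℝ)

/-- The weight `w` slash action of a real `2 × 2` matrix `g = [[a,b],[c,d]]` (of positive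
determinant) on functions: `(f ∣[w] g)(τ) = det(g)^{w/2} (cτ+d)^{-w} f((aτ+b)/(cτ+d))`. -/
def slash (w : ℤ) (g : Matrix (Fin 2) (Fin 2) ℝ) (f : ℂ → ℂ) : ℂ → ℂ := fun τ =>
  (Real.sqrt g.det : ℂ) ^ w * ((g 1 0 : ℂ) * τ + (g 1 1 : ℂ)) ^ (-w) *
    f (((g 0 0 : ℂ) * τ + (g 0 1 : ℂ)) / ((g 1 0 : ℂ) * τ + (g 1 1 : ℂ)))

/-- `χ : ℤ → ℂ` is a quadratic Dirichlet character modulo `D`. -/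
structure IsQuadDirChar (D : ℕ) (χ : ℤ → ℂ) : Prop where
  periodic : ∀ a : ℤ, χ (a + D) = χ a
  mul : ∀ a b : ℤ, χ (a * b) = χ a * χ b
  eq_zero_iff : ∀ a : ℤ, χ a = 0 ↔ ¬ IsCoprime a (D : ℤ)
  sq_vals : ∀ a : ℤ, χ a = 0 ∨ χ a = 1 ∨ χ a = -1

/-- `f : ℍ → ℂ` is a weakly holomorphic modular form of weight `w`, level `Γ₀(D)`, character
`χ`, holomorphic outside the cusp `∞`, with Fourier coefficients `c`; i.e. `f ∈ M^{!,∞}_w(D,χ)`.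
Only the restriction of `f` to the upper half plane matters. -/
structure IsWeaklyHolInfty (D : ℕ) (χ : ℤ → ℂ) (w : ℤ) (f : ℂ → ℂ) (c : ℤ → ℂ) : Prop where
  holo : DifferentiableOn ℂ f UHP
  transform : ∀ γ : Matrix.SpecialLinearGroup (Fin 2) ℤ, (D : ℤ) ∣ γ 1 0 →
    ∀ τ ∈ UHP, slash w (matR γ) f τ = χ (γ 1 1) * f τ
  coeff_bddBelow : ∃ m₀ : ℤ, ∀ m : ℤ, m < -m₀ → c m = 0
  fourier : ∀ τ ∈ UHP,
    HasSum (fun m : ℤ => c m * Complex.exp (2 * (Real.pi : ℂ) * Complex.I * m * τ)) (f τ)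
  bdd_at_other_cusps : ∀ γ : Matrix.SpecialLinearGroup (Fin 2) ℤ, ¬ (D : ℤ) ∣ γ 1 0 →
    ∃ C : ℝ, ∀ τ : ℂ, 1 ≤ τ.im → ‖slash w (matR γ) f τ‖ ≤ C

/-- An odd nonnegative representative of `a` modulo `D` (for odd `D`). -/
def oddRep (D : ℕ) (a : ℤ) : ℕ :=
  if (a % (D : ℤ)).toNat % 2 = 1 then (a % (D : ℤ)).toNat else (a % (D : ℤ)).toNat + D

/-- The quadratic Dirichlet character `χ_k` modulo `D` attached to the imaginary quadratic field
`k` of discriminant `-D`, via the Jacobi symbol. -/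
def chiK (D : ℕ) (a : ℤ) : ℤ := jacobiSym (-(D : ℤ)) (oddRep D a)

/-- The element `(1 + √-D)/2` of `ℂ`. -/
def okGen (D : ℕ) : ℂ := (1 + Real.sqrt D * Complex.I) / 2

/-- The ring of integers `O_k = ℤ[(1+√-D)/2]` of the imaginary quadratic field
`k = ℚ(√-D) ⊆ ℂ` of discriminant `-D` (for squarefree `D ≡ 3 mod 4`). -/
def Ok (D : ℕ) : Subring ℂ := Subring.closure {okGen D}

/-!
Put `k = n - 2`. The trace form of `L₀` is an even lattice over `ℤ` of rank `2k`, whose Gram matrix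
`A` has determinant `D ^ k` and level dividing `D`. For all `i`, `j` its theta series weighted by
the harmonic polynomial `yᵢ yⱼ - (Aᵢⱼ / 2k) yᵀ A⁻¹ y`, where `y = A x`, is a modular form for
`Γ₀(D)` of weight `n` and character `χ`, by Poisson summation and the evaluation of quadratic Gauss
sums. It vanishes at the cusps because the polynomial vanishes at `0`. Its product with `f` is
therefore a form of weight `2` which tends to zero at all cusps other than `∞`, and by the residue
theorem the constant term of the product is zero. This says
`∑ₓ c(-Q(x)) (A x)ᵢ (A x)ⱼ = Aᵢⱼ mult(f)`, so that `Aᵢⱼ mult(f)` is an integer for all `i`, `j`.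
If a prime `p` divided all `Aᵢⱼ`, then `p ^ (2k)` would divide `D ^ k`, which is impossible for
squarefree `D`. Hence `mult(f)` itself is an integer.
-/

/-! ### Positive definite forms and lattice sums -/

section QuadForm

open Matrix

variable {ι κ : Type*} [Fintype ι] [Fintype κ]

/-- The real quadratic form `x ↦ xᵀ A x` of a matrix `A`. -/
def quadForm (A : Matrix ι ι ℝ) (x : ι → ℝ) : ℝ := x ⬝ᵥ A *ᵥ x

/-- An integer vector, viewed as a real vector. -/
def realVec {ι : Type*} (x : ι → ℤ) : ι → ℝ := fun i => x i

lemma realVec_add {ι : Type*} (x y : ι → ℤ) : realVec (x + y) = realVec x + realVec y := by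
  ext i; simp [realVec]

lemma realVec_zsmul {ι : Type*} (t : ℤ) (x : ι → ℤ) : realVec (t • x) = (t : ℝ) • realVec x := by
  ext i; simp [realVec]

lemma quadForm_zero (A : Matrix ι ι ℝ) : quadForm A 0 = 0 := by simp [quadForm]

lemma quadForm_smul (A : Matrix ι ι ℝ) (t : ℝ) (x : ι → ℝ) :
    quadForm A (t • x) = t ^ 2 * quadForm A x := by
  simp only [quadForm, mulVec_smul, smul_dotProduct, dotProduct_smul, smul_eq_mul]
  ring

lemma continuous_quadForm (A : Matrix ι ι ℝ) : Continuous (quadForm A) := by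
  unfold quadForm mulVec dotProduct
  fun_prop

lemma quadForm_submatrix (A : Matrix κ κ ℝ) (e : ι ≃ κ) (x : ι → ℝ) :
    quadForm (A.submatrix e e) x = quadForm A (x ∘ e.symm) := by
  rw [quadForm, quadForm, submatrix_mulVec_equiv, comp_equiv_symm_dotProduct]

lemma quadForm_pos {A : Matrix ι ι ℝ} (hA : A.PosDef) {x : ι → ℝ} (hx : x ≠ 0) :
    0 < quadForm A x := by
  simpa [quadForm] using hA.dotProduct_mulVec_pos hx

lemma dotProduct_mulVec_comm {A : Matrix ι ι ℝ} (hA : A.IsHermitian) (x y : ι → ℝ) :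
    x ⬝ᵥ A *ᵥ y = A *ᵥ x ⬝ᵥ y := by
  rw [dotProduct_mulVec, ← mulVec_transpose, ← conjTranspose_eq_transpose_of_trivial, hA.eq]

lemma quadForm_add {A : Matrix ι ι ℝ} (hA : A.IsHermitian) (x y : ι → ℝ) :
    quadForm A (x + y) = quadForm A x + 2 * (x ⬝ᵥ A *ᵥ y) + quadForm A y := by
  have hyx : y ⬝ᵥ A *ᵥ x = x ⬝ᵥ A *ᵥ y := by rw [dotProduct_mulVec_comm hA x y, dotProduct_comm]
  simp only [quadForm, mulVec_add, dotProduct_add, add_dotProduct, hyx]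
  ring

lemma quadForm_inv_mulVec [DecidableEq ι] {A : Matrix ι ι ℝ} (hA : A.PosDef) (x : ι → ℝ) :
    quadForm A⁻¹ (A *ᵥ x) = quadForm A x := by
  rw [quadForm, mulVec_mulVec, nonsing_inv_mul _ ((isUnit_iff_isUnit_det _).mp hA.isUnit),
    one_mulVec, quadForm, dotProduct_comm]

lemma quadForm_map_intCast_realVec (A : Matrix ι ι ℤ) (x : ι → ℤ) :
    quadForm (A.map (Int.cast : ℤ → ℝ)) (realVec x) = (x ⬝ᵥ A *ᵥ x : ℤ) := by
  simp [quadForm, realVec, dotProduct, mulVec]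

lemma det_map_intCast [DecidableEq ι] (A : Matrix ι ι ℤ) :
    (A.map (Int.cast : ℤ → ℝ)).det = A.det :=
  ((Int.castRingHom ℝ).map_det A).symm

lemma exists_mul_sq_norm_le_quadForm {A : Matrix ι ι ℝ} (hA : A.PosDef) :
    ∃ δ > 0, ∀ x, δ * ‖x‖ ^ 2 ≤ quadForm A x := by
  obtain hι | hι := isEmpty_or_nonempty ι
  · exact ⟨1, one_pos, fun x => by simp [Subsingleton.elim x 0, quadForm_zero]⟩
  obtain ⟨x₀, hx₀, hmin⟩ := (isCompact_sphere (0 : ι → ℝ) 1).exists_isMinOn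
    (NormedSpace.sphere_nonempty.mpr zero_le_one) (continuous_quadForm A).continuousOn
  have hx₀' : x₀ ≠ 0 := ne_zero_of_mem_unit_sphere ⟨x₀, hx₀⟩
  refine ⟨quadForm A x₀, quadForm_pos hA hx₀', fun x => ?_⟩
  obtain rfl | hx := eq_or_ne x 0
  · simp [quadForm_zero]
  have hxn : 0 < ‖x‖ := norm_pos_iff.mpr hx
  have hle := isMinOn_iff.mp hmin (‖x‖⁻¹ • x) (by simp [norm_smul, hxn.ne'])
  rwa [quadForm_smul, inv_pow, inv_mul_eq_div, le_div_iff₀ (by positivity)] at hle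

end QuadForm

section LatticeSums

open Real Complex Filter Topology Asymptotics Matrix

variable {ι : Type*} [Fintype ι]

lemma tendsto_norm_realVec_cofinite :
    Tendsto (fun x : ι → ℤ => ‖realVec x‖) cofinite atTop := by
  have hemb : IsClosedEmbedding (realVec : (ι → ℤ) → ι → ℝ) :=
    IsClosedEmbedding.piMap fun _ => Int.isClosedEmbedding_coe_real
  rw [← cocompact_eq_cofinite]
  exact tendsto_norm_cocompact_atTop.comp hemb.tendsto_cocompact

lemma summable_norm_realVec_rpow {s : ℝ} (hs : s < -Fintype.card ι) :
    Summable fun x : ι → ℤ => ‖realVec x‖ ^ s := by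
  classical
  let b := (Pi.basisFun ℝ ι).restrictScalars ℤ
  have hb (x : ι → ℤ) : (b.equivFun.symm x : ι → ℝ) = realVec x := by
    ext i
    simp [b, Module.Basis.equivFun_symm_apply, realVec, Pi.single_apply]
  have hL := ZLattice.summable_norm_rpow (Submodule.span ℤ (Set.range (Pi.basisFun ℝ ι))) s
    (by rwa [Module.finrank_eq_card_basis b])
  exact (b.equivFun.symm.toEquiv.summable_iff.mpr hL).congr fun x => by
    rw [Function.comp_apply, LinearEquiv.coe_toEquiv, ← hb, Submodule.coe_norm]

lemma summable_exp_neg_norm_realVec : Summable fun x : ι → ℤ => rexp (-‖realVec x‖) := by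
  refine summable_of_isBigO (summable_norm_realVec_rpow (s := -Fintype.card ι - 1) (by simp)) ?_
  simpa [Function.comp_def] using ((isLittleO_exp_neg_mul_rpow_atTop one_pos _).isBigO.comp_tendsto
    (tendsto_norm_realVec_cofinite (ι := ι)))

/-- Functions on `ℝ^ι` of at most exponential growth: the weights against which Gaussian lattice
sums converge. -/
def HasExpGrowth (P : (ι → ℝ) → ℂ) : Prop :=
  ∃ α : ℝ, P =O[⊤] fun y => rexp (α * ‖y‖)

namespace HasExpGrowth

variable {P P' : (ι → ℝ) → ℂ}

lemma of_norm_le {C α : ℝ} (h : ∀ y, ‖P y‖ ≤ C * rexp (α * ‖y‖)) : HasExpGrowth P :=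
  ⟨α, IsBigO.of_bound C <| Eventually.of_forall fun y => by simpa using h y⟩

lemma const (c : ℂ) : HasExpGrowth fun _ : ι → ℝ => c :=
  of_norm_le (C := ‖c‖) (α := 0) (by simp)

lemma add (h : HasExpGrowth P) (h' : HasExpGrowth P') : HasExpGrowth fun y => P y + P' y := by
  obtain ⟨α, hα⟩ := h
  obtain ⟨α', hα'⟩ := h'
  have hmono {γ : ℝ} (hγ : γ ≤ max α α') :
      (fun y : ι → ℝ => rexp (γ * ‖y‖)) =O[⊤] fun y => rexp (max α α' * ‖y‖) :=
    IsBigO.of_norm_le fun y => by rw [norm_of_nonneg (exp_nonneg _)]; gcongr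
  exact ⟨max α α', (hα.trans (hmono (le_max_left _ _))).add (hα'.trans (hmono (le_max_right _ _)))⟩

lemma mul (h : HasExpGrowth P) (h' : HasExpGrowth P') : HasExpGrowth fun y => P y * P' y := by
  obtain ⟨α, hα⟩ := h
  obtain ⟨α', hα'⟩ := h'
  exact ⟨α + α', by simpa only [add_mul, Real.exp_add] using hα.mul hα'⟩

lemma const_mul (h : HasExpGrowth P) (c : ℂ) : HasExpGrowth fun y => c * P y :=
  (const c).mul h

lemma sum {κ : Type*} (s : Finset κ) {P : κ → (ι → ℝ) → ℂ} (h : ∀ i ∈ s, HasExpGrowth (P i)) :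
    HasExpGrowth fun y => ∑ i ∈ s, P i y := by
  classical
  induction s using Finset.induction_on with
  | empty => simpa using const 0
  | insert a s ha ih =>
    simp_rw [Finset.sum_insert ha]
    exact (h a (by simp)).add (ih fun i hi => h i (by simp [hi]))

lemma exp_norm_clm {E : Type*} [SeminormedAddCommGroup E] [NormedSpace ℝ E] (l : (ι → ℝ) →L[ℝ] E) :
    HasExpGrowth fun y => (rexp ‖l y‖ : ℂ) :=
  of_norm_le (C := 1) (α := ‖l‖) fun y => by
    rw [norm_real, norm_of_nonneg (exp_nonneg _), one_mul]
    exact exp_le_exp.mpr (l.le_opNorm y)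

lemma clm (l : (ι → ℝ) →L[ℝ] ℂ) : HasExpGrowth l := by
  obtain ⟨α, hα⟩ := exp_norm_clm l
  refine ⟨α, IsBigO.trans (IsBigO.of_norm_le fun y => ?_) hα.norm_left⟩
  rw [norm_real, norm_of_nonneg (Real.exp_nonneg _)]
  linarith [Real.add_one_le_exp ‖l y‖]

lemma comp_clm_sub (h : HasExpGrowth P) (l : (ι → ℝ) →L[ℝ] ι → ℝ) (w : ι → ℝ) :
    HasExpGrowth fun y => P (l (y - w)) := by
  obtain ⟨α, hα⟩ := h
  have hle (y : ι → ℝ) : α * ‖l (y - w)‖ ≤ |α| * ‖l‖ * ‖w‖ + |α| * ‖l‖ * ‖y‖ :=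
    calc α * ‖l (y - w)‖ ≤ |α| * (‖l‖ * (‖y‖ + ‖w‖)) := by
          gcongr
          · exact le_abs_self α
          · exact (l.le_opNorm _).trans (by gcongr; exact norm_sub_le y w)
      _ = _ := by ring
  refine ⟨|α| * ‖l‖, (hα.comp_tendsto tendsto_top).trans (IsBigO.of_bound
    (rexp (|α| * ‖l‖ * ‖w‖)) <| Eventually.of_forall fun y => ?_)⟩
  simpa [← Real.exp_add] using hle y

/-- Completing the square absorbs both the growth of `P` and the shift `w`. -/
lemma summable (h : HasExpGrowth P) {A : Matrix ι ι ℝ} (hA : A.PosDef) {ρ : ℝ} (hρ : 0 < ρ)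
    (w : ι → ℝ) :
    Summable fun x : ι → ℤ => P (realVec x) * (rexp (-ρ * quadForm A (realVec x - w)) : ℂ) := by
  obtain ⟨α, hα⟩ := h
  obtain ⟨δ, hδ, hle⟩ := exists_mul_sq_norm_le_quadForm hA
  set a := ρ * δ with ha
  have ha0 : 0 < a := mul_pos hρ hδ
  have hexp (y : ι → ℝ) : α * ‖y‖ + -ρ * quadForm A (y - w) ≤
      (|α| + 1) * ‖w‖ + (|α| + 1) ^ 2 / (4 * a) - ‖y‖ := by
    have hy : (|α| + 1) * ‖y‖ ≤ (|α| + 1) * (‖y - w‖ + ‖w‖) := by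
      gcongr; simpa using norm_add_le (y - w) w
    have hα' : α * ‖y‖ ≤ |α| * ‖y‖ := by gcongr; exact le_abs_self α
    have hsq : (|α| + 1) * ‖y - w‖ - a * ‖y - w‖ ^ 2 ≤ (|α| + 1) ^ 2 / (4 * a) := by
      rw [le_div_iff₀ (mul_pos four_pos ha0)]
      nlinarith [sq_nonneg (|α| + 1 - 2 * a * ‖y - w‖)]
    have hq : a * ‖y - w‖ ^ 2 ≤ ρ * quadForm A (y - w) := by
      rw [ha, mul_assoc]; gcongr; exact hle _
    linarith
  refine summable_of_isBigO summable_exp_neg_norm_realVec (((hα.comp_tendsto tendsto_top).mul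
    (IsBigO.of_norm_le (g := fun x => rexp (-ρ * quadForm A (realVec x - w))) fun x => ?_)).trans
    (IsBigO.of_bound (rexp ((|α| + 1) * ‖w‖ + (|α| + 1) ^ 2 / (4 * a))) <|
      Eventually.of_forall fun x => ?_))
  · rw [norm_real, norm_of_nonneg (Real.exp_nonneg _)]
  · simpa [← Real.exp_add, ← sub_eq_add_neg] using hexp (realVec x)

end HasExpGrowth

end LatticeSums

/-! ### Poisson summation for Gaussians -/

section Blocks

open Matrix

variable {ι κ : Type*} [Fintype ι] [DecidableEq ι]
  {A : Matrix ι ι ℝ} {B : Matrix ι κ ℝ} {C : Matrix κ κ ℝ}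

lemma quadForm_fromBlocks [Fintype κ] (hA : A.PosDef) (x : ι → ℝ) (y : κ → ℝ) :
    quadForm (fromBlocks A B Bᴴ C) (Sum.elim x y) =
      quadForm A (x + A⁻¹ *ᵥ B *ᵥ y) + quadForm (C - Bᴴ * A⁻¹ * B) y := by
  let := hA.isUnit.invertible
  have h := schur_complement_eq₁₁ B C x y hA.isHermitian
  simpa only [star_trivial, ← dotProduct_mulVec, ← mulVec_mulVec, quadForm] using h

lemma posDef_schurComplement [Finite κ] (hA : A.PosDef) (hZ : (fromBlocks A B Bᴴ C).PosDef) :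
    (C - Bᴴ * A⁻¹ * B).PosDef := by
  have := Fintype.ofFinite κ
  refine .of_dotProduct_mulVec_pos ((IsHermitian.fromBlocks₁₁ _ _ hA.isHermitian).mp hZ.isHermitian)
    fun y hy => ?_
  have hne : Sum.elim (-(A⁻¹ *ᵥ B *ᵥ y)) y ≠ 0 := fun h => hy (funext fun j => congrFun h (.inr j))
  have h := quadForm_pos hZ hne
  rwa [quadForm_fromBlocks hA, neg_add_cancel, quadForm_zero, zero_add] at h

lemma quadForm_inv_fromBlocks [Fintype κ] [DecidableEq κ] (hA : A.PosDef)
    (hZ : (fromBlocks A B Bᴴ C).PosDef)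
    (x : ι → ℝ) (y : κ → ℝ) :
    quadForm (fromBlocks A B Bᴴ C)⁻¹ (Sum.elim x y) =
      quadForm A⁻¹ x + quadForm (C - Bᴴ * A⁻¹ * B)⁻¹ (y - Bᴴ *ᵥ A⁻¹ *ᵥ x) := by
  have hS := posDef_schurComplement hA hZ
  set S := C - Bᴴ * A⁻¹ * B with hSdef
  have hAinv (z : ι → ℝ) : A *ᵥ A⁻¹ *ᵥ z = z := by
    rw [mulVec_mulVec, mul_nonsing_inv _ ((isUnit_iff_isUnit_det _).mp hA.isUnit), one_mulVec]
  have hSinv (z : κ → ℝ) : S *ᵥ S⁻¹ *ᵥ z = z := by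
    rw [mulVec_mulVec, mul_nonsing_inv _ ((isUnit_iff_isUnit_det _).mp hS.isUnit), one_mulVec]
  set b := S⁻¹ *ᵥ (y - Bᴴ *ᵥ A⁻¹ *ᵥ x) with hb
  have hC : C *ᵥ b = S *ᵥ b + Bᴴ *ᵥ A⁻¹ *ᵥ B *ᵥ b := by
    simp only [hSdef, sub_mulVec, mulVec_mulVec, Matrix.mul_assoc, sub_add_cancel]
  have hsolve : fromBlocks A B Bᴴ C *ᵥ Sum.elim (A⁻¹ *ᵥ x - A⁻¹ *ᵥ B *ᵥ b) b = Sum.elim x y := by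
    rw [fromBlocks_mulVec, Sum.elim_comp_inl, Sum.elim_comp_inr, mulVec_sub, mulVec_sub, hAinv,
      hAinv, hC, hb, hSinv]
    congr 1 <;> abel
  rw [← hsolve, quadForm_inv_mulVec hZ, quadForm_fromBlocks hA, sub_add_cancel,
    ← quadForm_inv_mulVec hA, hAinv, hb, ← quadForm_inv_mulVec hS, hSinv]

lemma det_fromBlocks_eq_mul_schurComplement [Fintype κ] [DecidableEq κ] (hA : A.PosDef) :
    (fromBlocks A B Bᴴ C).det = A.det * (C - Bᴴ * A⁻¹ * B).det := by
  let := hA.isUnit.invertible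
  rw [det_fromBlocks₁₁, invOf_eq_nonsing_inv]

end Blocks

section Poisson

open Real Complex Matrix

lemma tsum_sumElim {ι κ : Type*} {F : (ι ⊕ κ → ℤ) → ℂ} (hF : Summable F) :
    ∑' z, F z = ∑' (x : ι → ℤ) (y : κ → ℤ), F (Sum.elim x y) :=
  ((Equiv.sumArrowEquivProdArrow ι κ ℤ).symm.tsum_eq F).symm.trans
    ((Equiv.sumArrowEquivProdArrow ι κ ℤ).symm.summable_iff.mpr hF).tsum_prod

lemma tsum_sumElim_comm {ι κ : Type*} {F : (ι ⊕ κ → ℤ) → ℂ} (hF : Summable F) :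
    ∑' z, F z = ∑' (y : κ → ℤ) (x : ι → ℤ), F (Sum.elim x y) := by
  have hF' : Summable (Function.uncurry fun (x : ι → ℤ) (y : κ → ℤ) => F (Sum.elim x y)) :=
    (Equiv.sumArrowEquivProdArrow ι κ ℤ).symm.summable_iff.mpr hF
  exact (tsum_sumElim hF).trans hF'.tsum_comm.symm

variable {ι κ : Type*} [Fintype ι] [Fintype κ]

lemma realVec_sumElim {ι κ : Type*} (x : ι → ℤ) (y : κ → ℤ) :
    realVec (Sum.elim x y) = Sum.elim (realVec x) (realVec y) := by
  ext (i | i) <;> rfl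

lemma quadForm_unique [Unique ι] (A : Matrix ι ι ℝ) (x : ι → ℝ) :
    quadForm A x = A default default * x default ^ 2 := by
  simp only [quadForm, mulVec, dotProduct, Fintype.sum_unique]
  ring

lemma norm_cexp_gaussian (β : ℂ) (q s : ℝ) :
    ‖cexp (-π * β * q + 2 * π * I * s)‖ = rexp (-(π * β.re) * q) := by
  simp [Complex.norm_exp]

lemma re_inv_pos {β : ℂ} (hβ : 0 < β.re) : 0 < (β⁻¹).re := by
  rw [inv_re]
  exact div_pos hβ (normSq_pos.mpr fun h => by simp [h] at hβ)

/-- The value at the lattice point `x` of the Gaussian of `A` with parameter `β`, shifted by `v` and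
twisted by the character `w`. -/
def gaussianTerm (A : Matrix ι ι ℝ) (β : ℂ) (v w : ι → ℝ) (x : ι → ℤ) : ℂ :=
  cexp (-π * β * quadForm A (realVec x + v) + 2 * π * I * (w ⬝ᵥ realVec x : ℝ))

lemma summable_gaussianTerm {A : Matrix ι ι ℝ} (hA : A.PosDef) {β : ℂ} (hβ : 0 < β.re)
    (v w : ι → ℝ) : Summable (gaussianTerm A β v w) := by
  rw [← summable_norm_iff]
  have h := (HasExpGrowth.const (ι := ι) 1).summable hA (mul_pos pi_pos hβ) (-v)
  simpa only [gaussianTerm, norm_cexp_gaussian, one_mul, summable_ofReal, sub_neg_eq_add] using h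

lemma summable_phase_mul_gaussianTerm {A : Matrix ι ι ℝ} {S : Matrix κ κ ℝ} (hA : A.PosDef)
    {β γ : ℂ} (hβ : 0 < β.re) (hS : S.PosDef) (hγ : 0 < γ.re) (v : ι → ℝ) (w : (κ → ℤ) → ι → ℝ)
    (v' w' : κ → ℝ) (φ : (κ → ℤ) → ℝ) :
    Summable (Function.uncurry fun y x => cexp (-2 * π * I * φ y) *
      gaussianTerm A β v (w y) x * gaussianTerm S γ v' w' y) := by
  refine .of_norm_bounded ((summable_gaussianTerm hS hγ v' 0).norm.mul_of_nonneg
    (summable_gaussianTerm hA hβ v 0).norm (fun _ => norm_nonneg _) fun _ => norm_nonneg _)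
    fun p => le_of_eq ?_
  have hphase (s : ℝ) : ‖cexp (-2 * π * I * s)‖ = 1 := by simp [Complex.norm_exp]
  simp only [Function.uncurry_def, norm_mul, hphase, gaussianTerm, norm_cexp_gaussian, one_mul]
  rw [mul_comm]

section BlockTerms

variable [DecidableEq ι] {A : Matrix ι ι ℝ} {B : Matrix ι κ ℝ} {C : Matrix κ κ ℝ}

lemma gaussianTerm_fromBlocks (hA : A.PosDef) (β : ℂ) (v₁ w₁ : ι → ℝ) (v₂ w₂ : κ → ℝ)
    (x : ι → ℤ) (y : κ → ℤ) :
    gaussianTerm (fromBlocks A B Bᴴ C) β (Sum.elim v₁ v₂) (Sum.elim w₁ w₂) (Sum.elim x y) =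
      gaussianTerm A β (v₁ + A⁻¹ *ᵥ B *ᵥ (realVec y + v₂)) w₁ x *
        gaussianTerm (C - Bᴴ * A⁻¹ * B) β v₂ w₂ y := by
  simp only [gaussianTerm]
  rw [← Complex.exp_add, realVec_sumElim, ← Sum.elim_add_add, quadForm_fromBlocks hA,
    sumElim_dotProduct_sumElim, add_assoc (realVec x)]
  push_cast
  ring_nf

lemma gaussianTerm_inv_fromBlocks [DecidableEq κ] (hA : A.PosDef)
    (hZ : (fromBlocks A B Bᴴ C).PosDef) (β : ℂ)
    (v₁ w₁ : ι → ℝ) (v₂ w₂ : κ → ℝ) (x : ι → ℤ) (y : κ → ℤ) :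
    gaussianTerm (fromBlocks A B Bᴴ C)⁻¹ β (-Sum.elim w₁ w₂) (Sum.elim v₁ v₂) (Sum.elim x y) =
      gaussianTerm A⁻¹ β (-w₁) v₁ x * gaussianTerm (C - Bᴴ * A⁻¹ * B)⁻¹ β
        (-(w₂ + Bᴴ *ᵥ A⁻¹ *ᵥ (realVec x - w₁))) v₂ y := by
  have hvec : realVec (Sum.elim x y) - Sum.elim w₁ w₂ =
      Sum.elim (realVec x - w₁) (realVec y - w₂) := by ext (i | i) <;> rfl
  simp only [gaussianTerm, ← sub_eq_add_neg, hvec]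
  rw [← Complex.exp_add, quadForm_inv_fromBlocks hA hZ, realVec_sumElim,
    sumElim_dotProduct_sumElim, sub_sub]
  push_cast
  ring_nf

/-- The two orders of summation see the cross term `xᵀ A⁻¹ B y` as part of either character. -/
lemma gaussianTerm_mul_comm_cross (hA : A.PosDef) (S : Matrix κ κ ℝ) (β β' : ℂ)
    (v₁ w₁ : ι → ℝ) (v₂ w₂ : κ → ℝ) (x : ι → ℤ) (y : κ → ℤ) :
    cexp (-2 * π * I * (w₁ ⬝ᵥ (v₁ + A⁻¹ *ᵥ B *ᵥ (realVec y + v₂)) : ℝ)) *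
        gaussianTerm A⁻¹ β' (-w₁) (v₁ + A⁻¹ *ᵥ B *ᵥ (realVec y + v₂)) x *
          gaussianTerm S β v₂ w₂ y =
      cexp (-2 * π * I * (w₁ ⬝ᵥ v₁ - Bᴴ *ᵥ A⁻¹ *ᵥ (realVec x - w₁) ⬝ᵥ v₂ : ℝ)) *
        gaussianTerm A⁻¹ β' (-w₁) v₁ x *
          gaussianTerm S β v₂ (w₂ + Bᴴ *ᵥ A⁻¹ *ᵥ (realVec x - w₁)) y := by
  have hadj (z : ι → ℝ) (u : κ → ℝ) : z ⬝ᵥ A⁻¹ *ᵥ B *ᵥ u = Bᴴ *ᵥ A⁻¹ *ᵥ z ⬝ᵥ u := by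
    rw [dotProduct_mulVec_comm hA.inv.isHermitian, dotProduct_mulVec,
      conjTranspose_eq_transpose_of_trivial, mulVec_transpose]
  simp only [gaussianTerm, ← Complex.exp_add, dotProduct_add, add_dotProduct, mulVec_sub,
    sub_dotProduct, mulVec_add, hadj, dotProduct_comm _ (realVec x)]
  push_cast
  ring_nf

end BlockTerms

/-- Poisson summation for the Gaussian of `A`. The shift `v` and the character `w` make the
statement stable under the block step. -/
def PoissonGaussian [DecidableEq ι] (A : Matrix ι ι ℝ) : Prop :=
  ∀ β : ℂ, 0 < β.re → ∀ v w : ι → ℝ,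
    ∑' x, gaussianTerm A β v w x = 1 / (√A.det : ℂ) * (1 / β ^ (1 / 2 : ℂ)) ^ Fintype.card ι *
      (cexp (-2 * π * I * (w ⬝ᵥ v : ℝ)) * ∑' y, gaussianTerm A⁻¹ β⁻¹ (-w) v y)

namespace PoissonGaussian

variable [DecidableEq ι] [DecidableEq κ]

lemma of_isEmpty [IsEmpty ι] (A : Matrix ι ι ℝ) : PoissonGaussian A := fun β _ v w => by
  simp [tsum_fintype, gaussianTerm, quadForm]

lemma of_submatrix {A : Matrix κ κ ℝ} (e : ι ≃ κ) (h : PoissonGaussian (A.submatrix e e)) :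
    PoissonGaussian A := fun β hβ v w => by
  have hterm (A : Matrix κ κ ℝ) (β : ℂ) (v w : κ → ℝ) (x : κ → ℤ) :
      gaussianTerm (A.submatrix e e) β (v ∘ e) (w ∘ e) ((e.arrowCongr (Equiv.refl ℤ)).symm x) =
        gaussianTerm A β v w x := by
    have hx : realVec ((e.arrowCongr (Equiv.refl ℤ)).symm x) = realVec x ∘ e := rfl
    have hcomp : (realVec x ∘ e + v ∘ e) ∘ e.symm = realVec x + v := by ext; simp
    rw [gaussianTerm, quadForm_submatrix, hx, hcomp, comp_equiv_dotProduct_comp_equiv, gaussianTerm]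
  have key := h β hβ (v ∘ e) (w ∘ e)
  have hneg : -(w ∘ e) = (-w) ∘ e := rfl
  rw [← (e.arrowCongr (Equiv.refl ℤ)).symm.tsum_eq, ← (e.arrowCongr (Equiv.refl ℤ)).symm.tsum_eq
    (gaussianTerm _ β⁻¹ _ _), inv_submatrix_equiv, hneg] at key
  simpa only [hterm, det_submatrix_equiv_self, comp_equiv_dotProduct_comp_equiv,
    Fintype.card_congr e] using key

lemma of_unique [Unique ι] {A : Matrix ι ι ℝ} (hA : A.PosDef) : PoissonGaussian A := by
  intro β hβ v w
  set a := A default default with ha_def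
  set v₀ := v default with hv
  set w₀ := w default with hw
  have ha : 0 < a := hA.diag_pos
  have haC : (a : ℂ) ≠ 0 := by exact_mod_cast ha.ne'
  have hβ0 : β ≠ 0 := by rintro rfl; simp at hβ
  have hinv : A⁻¹ default default = a⁻¹ := by simp [inv_subsingleton, ha_def]
  have hsqrt : ((a : ℂ) * β) ^ (1 / 2 : ℂ) = √a * β ^ (1 / 2 : ℂ) := by
    rw [cpow_def_of_ne_zero (mul_ne_zero haC hβ0), log_ofReal_mul ha hβ0, add_mul, Complex.exp_add,
      ofReal_log ha.le, ← cpow_def_of_ne_zero haC, ← cpow_def_of_ne_zero hβ0, sqrt_eq_rpow,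
      ofReal_cpow ha.le, ofReal_div, ofReal_one, ofReal_ofNat]
  have hval (n : ℤ) : realVec ((Equiv.funUnique ι ℤ).symm n) default = (n : ℝ) := rfl
  rw [← (Equiv.funUnique ι ℤ).symm.tsum_eq, ← (Equiv.funUnique ι ℤ).symm.tsum_eq
    (gaussianTerm _ β⁻¹ _ _)]
  simp only [gaussianTerm, quadForm_unique, dotProduct, Fintype.sum_unique, Pi.add_apply,
    Pi.neg_apply, hval, hinv, det_unique, ← hv, ← hw, ← ha_def]
  calc _ = cexp (-π * a * β * v₀ ^ 2) * ∑' n : ℤ,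
        cexp (-π * (a * β) * n ^ 2 + 2 * π * (I * w₀ - a * β * v₀) * n) := by
        rw [← tsum_mul_left]
        refine tsum_congr fun n => ?_
        rw [← Complex.exp_add]
        push_cast
        ring_nf
    _ = _ := by
        rw [Complex.tsum_exp_neg_quadratic (by simpa using mul_pos ha hβ), hsqrt, mul_left_comm,
          Fintype.card_unique, pow_one, one_div_mul_one_div]
        congr 1
        rw [← tsum_mul_left, ← tsum_mul_left]
        refine tsum_congr fun n => ?_
        rw [← Complex.exp_add, ← Complex.exp_add]
        push_cast
        congr 1
        field_simp
        linear_combination ((1 - I ^ 2) * w₀ ^ 2 + 2 * I * a * β * v₀ * w₀ -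
          a ^ 2 * β ^ 2 * v₀ ^ 2 - 2 * n * w₀) * I_sq

lemma of_schurComplement {A : Matrix ι ι ℝ} {B : Matrix ι κ ℝ} {C : Matrix κ κ ℝ} (hA : A.PosDef)
    (hZ : (fromBlocks A B Bᴴ C).PosDef) (h : PoissonGaussian A)
    (h' : PoissonGaussian (C - Bᴴ * A⁻¹ * B)) : PoissonGaussian (fromBlocks A B Bᴴ C) := by
  intro β hβ v w
  have hS := posDef_schurComplement hA hZ
  obtain ⟨v₁, v₂, rfl⟩ : ∃ v₁ v₂, v = Sum.elim v₁ v₂ := ⟨_, _, (Sum.elim_comp_inl_inr v).symm⟩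
  obtain ⟨w₁, w₂, rfl⟩ : ∃ w₁ w₂, w = Sum.elim w₁ w₂ := ⟨_, _, (Sum.elim_comp_inl_inr w).symm⟩
  let G (y : κ → ℤ) (x : ι → ℤ) : ℂ :=
    cexp (-2 * π * I * (w₁ ⬝ᵥ (v₁ + A⁻¹ *ᵥ B *ᵥ (realVec y + v₂)) : ℝ)) *
      gaussianTerm A⁻¹ β⁻¹ (-w₁) (v₁ + A⁻¹ *ᵥ B *ᵥ (realVec y + v₂)) x *
        gaussianTerm (C - Bᴴ * A⁻¹ * B) β v₂ w₂ y
  have hG : Summable (Function.uncurry G) :=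
    summable_phase_mul_gaussianTerm hA.inv (re_inv_pos hβ) hS hβ (-w₁)
      (fun y => v₁ + A⁻¹ *ᵥ B *ᵥ (realVec y + v₂)) v₂ w₂
      fun y => w₁ ⬝ᵥ (v₁ + A⁻¹ *ᵥ B *ᵥ (realVec y + v₂))
  calc _ = ∑' y, 1 / (√A.det : ℂ) * (1 / β ^ (1 / 2 : ℂ)) ^ Fintype.card ι * ∑' x, G y x := by
        rw [tsum_sumElim_comm (summable_gaussianTerm hZ hβ _ _)]
        refine tsum_congr fun y => ?_
        simp only [gaussianTerm_fromBlocks hA, G]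
        rw [tsum_mul_right, tsum_mul_right, tsum_mul_left, h β hβ]
        ring
    _ = 1 / (√A.det : ℂ) * (1 / β ^ (1 / 2 : ℂ)) ^ Fintype.card ι * ∑' x, ∑' y, G y x := by
        rw [tsum_mul_left, ← hG.tsum_comm]
    _ = _ := by
        rw [tsum_sumElim (summable_gaussianTerm hZ.inv (re_inv_pos hβ) _ _),
          det_fromBlocks_eq_mul_schurComplement hA, Real.sqrt_mul hA.det_pos.le, Fintype.card_sum,
          pow_add, ← tsum_mul_left, ← tsum_mul_left, ← tsum_mul_left]
        refine tsum_congr fun x => ?_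
        simp only [G, gaussianTerm_mul_comm_cross hA, gaussianTerm_inv_fromBlocks hA hZ]
        rw [tsum_mul_left, tsum_mul_left, h' β hβ, sumElim_dotProduct_sumElim]
        have hphase (a b c : ℝ) : cexp (-2 * π * I * (a + b : ℝ)) =
            cexp (-2 * π * I * (a - c : ℝ)) * cexp (-2 * π * I * (b + c : ℝ)) := by
          rw [← Complex.exp_add]
          push_cast
          ring_nf
        rw [add_dotProduct, hphase (w₁ ⬝ᵥ v₁) _ (Bᴴ *ᵥ A⁻¹ *ᵥ (realVec x - w₁) ⬝ᵥ v₂)]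
        push_cast
        ring

end PoissonGaussian

theorem poissonGaussian_of_posDef [DecidableEq ι] {A : Matrix ι ι ℝ} (hA : A.PosDef) :
    PoissonGaussian A := by
  revert A
  refine Fintype.induction_empty_option (P := fun ι _ => ∀ [DecidableEq ι] {A : Matrix ι ι ℝ},
    A.PosDef → PoissonGaussian A) ?_ ?_ ?_ ι
  · intro ι κ _ e ih _ A hA
    let := Fintype.ofEquiv κ e.symm
    let := Classical.decEq ι
    exact .of_submatrix e (ih (hA.submatrix e.injective))
  · exact fun _ => .of_isEmpty _
  · intro ι _ ih _ A hA
    let := Classical.decEq ι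
    let e : ι ⊕ Unit ≃ Option ι := (Equiv.optionEquivSumPUnit ι).symm
    refine .of_submatrix e ?_
    have hpos := hA.submatrix e.injective
    have h₂₁ : (A.submatrix e e).toBlocks₂₁ = (A.submatrix e e).toBlocks₁₂ᴴ := by
      ext i j
      exact (hpos.isHermitian.apply (Sum.inr i) (Sum.inl j)).symm
    have h₁₁ : (A.submatrix e e).toBlocks₁₁.PosDef := hpos.submatrix Sum.inl_injective
    rw [← fromBlocks_toBlocks (A.submatrix e e), h₂₁] at hpos ⊢
    exact .of_schurComplement h₁₁ hpos (ih h₁₁) (.of_unique (posDef_schurComplement h₁₁ hpos))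

end Poisson

section ExpSum

open Complex Real

variable {ι κ : Type*} {g l : ι → ℂ} {h m : κ → ℂ}

/-- The weights `g` at the frequencies `l` have exponential moments of every order, so that
`t ↦ ∑ g i * exp (t * l i)` can be differentiated term by term any number of times. -/
def HasExpMoments (g l : ι → ℂ) : Prop :=
  ∀ α : ℝ, Summable fun i => ‖g i‖ * rexp (α * ‖l i‖)

namespace HasExpMoments

lemma summable (hg : HasExpMoments g l) : Summable g :=
  .of_norm (by simpa using hg 0)

lemma const_mul (hg : HasExpMoments g l) (z : ℂ) : HasExpMoments (fun i => z * g i) l :=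
  fun α => by simpa only [norm_mul, mul_assoc] using (hg α).mul_left ‖z‖

lemma mul_frequency (hg : HasExpMoments g l) : HasExpMoments (fun i => g i * l i) l := by
  intro α
  refine (hg (1 + α)).of_nonneg_of_le (fun _ => by positivity) fun i => ?_
  have hl : ‖l i‖ ≤ rexp ‖l i‖ := (lt_add_one _).le.trans (Real.add_one_le_exp _)
  rw [norm_mul, mul_assoc, add_mul, one_mul, Real.exp_add]
  gcongr

lemma hasDerivAt (hg : HasExpMoments g l) (t : ℝ) :
    HasDerivAt (fun t : ℝ => ∑' i, g i * cexp (t * l i)) (∑' i, g i * l i * cexp (t * l i)) t := by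
  have hterm (i : ι) (s : ℝ) :
      HasDerivAt (fun s : ℝ => g i * cexp (s * l i)) (g i * l i * cexp (s * l i)) s := by
    have hs := ((ofRealCLM.hasDerivAt (x := s)).mul_const (l i)).cexp.const_mul (g i)
    convert! hs using 1
    simp only [ofRealCLM_apply, ofReal_one]
    ring
  have ht : t ∈ Metric.ball (0 : ℝ) (|t| + 1) := by simp
  refine hasDerivAt_tsum_of_isPreconnected (hg.mul_frequency (|t| + 1)) Metric.isOpen_ball
    (convex_ball 0 _).isPreconnected (fun i s _ => hterm i s) (fun i s hs => ?_) (y₀ := 0)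
    (Metric.mem_ball_self (by positivity)) (by simpa using hg.summable) ht
  have hre : ((s : ℂ) * l i).re ≤ (|t| + 1) * ‖l i‖ :=
    (re_le_norm _).trans (by rw [norm_mul, norm_real]; gcongr; exact (mem_ball_zero_iff.mp hs).le)
  rw [norm_mul, Complex.norm_exp]
  gcongr

lemma tsum_mul_sq_eq (hg : HasExpMoments g l) (hh : HasExpMoments h m) {a : ℂ}
    (heq : ∀ t : ℝ, ∑' i, g i * cexp (t * l i) = cexp (-a * t ^ 2) * ∑' i, h i * cexp (t * m i)) :
    ∑' i, g i * l i ^ 2 = ∑' i, h i * m i ^ 2 - 2 * a * ∑' i, h i := by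
  have hofReal (t : ℝ) : HasDerivAt (fun t : ℝ => (t : ℂ)) 1 t := ofRealCLM.hasDerivAt
  have hgauss (t : ℝ) :
      HasDerivAt (fun t : ℝ => cexp (-a * t ^ 2)) (-2 * a * t * cexp (-a * t ^ 2)) t := by
    convert! (((hofReal t).pow 2).const_mul (-a)).cexp using 1
    simp only [Pi.pow_apply]
    push_cast
    ring
  have hgauss' : HasDerivAt (fun t : ℝ => -2 * a * t * cexp (-a * t ^ 2)) (-2 * a) 0 := by
    convert! ((hofReal 0).const_mul (-2 * a)).mul (hgauss 0) using 1
    simp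
  have hderiv (t : ℝ) : ∑' i, g i * l i * cexp (t * l i) =
      -2 * a * t * cexp (-a * t ^ 2) * (∑' i, h i * cexp (t * m i)) +
        cexp (-a * t ^ 2) * ∑' i, h i * m i * cexp (t * m i) :=
    (hg.hasDerivAt t).unique (((hgauss t).mul (hh.hasDerivAt t)).congr_of_eventuallyEq
      (.of_forall heq))
  have hderiv₂ := (hg.mul_frequency.hasDerivAt 0).unique <|
    ((hgauss'.mul (hh.hasDerivAt 0)).add ((hgauss 0).mul
      (hh.mul_frequency.hasDerivAt 0))).congr_of_eventuallyEq (.of_forall hderiv)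
  simp only [ofReal_zero, zero_mul, Complex.exp_zero, mul_one, mul_zero, zero_pow two_ne_zero,
    one_mul, zero_add] at hderiv₂
  simp only [pow_two, ← mul_assoc, hderiv₂]
  ring

end HasExpMoments

end ExpSum

section PoissonWeights

open Complex Real Matrix

variable {ι : Type*} [Fintype ι] {A : Matrix ι ι ℝ} {P P' : (ι → ℝ) → ℂ}

lemma HasExpGrowth.summable_mul_gaussianTerm (hP : HasExpGrowth P) (hA : A.PosDef) {β : ℂ}
    (hβ : 0 < β.re) (v w : ι → ℝ) : Summable fun x => P (realVec x) * gaussianTerm A β v w x := by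
  refine .of_norm ((hP.summable hA (mul_pos pi_pos hβ) (-v)).norm.congr fun x => ?_)
  rw [norm_mul, norm_mul, norm_real, norm_of_nonneg (Real.exp_nonneg _), gaussianTerm,
    norm_cexp_gaussian, sub_neg_eq_add]

lemma HasExpGrowth.summable_mulVec_mul_gaussianTerm (hP : HasExpGrowth P) (hA : A.PosDef) {β : ℂ}
    (hβ : 0 < β.re) (B : Matrix ι ι ℝ) (u v w : ι → ℝ) :
    Summable fun x => P (B *ᵥ (realVec x - u)) * gaussianTerm A β v w x :=
  (hP.comp_clm_sub (LinearMap.toContinuousLinearMap B.mulVecLin) u).summable_mul_gaussianTerm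
    hA hβ v w

lemma hasExpMoments_gaussianTerm (hA : A.PosDef) {β : ℂ} (hβ : 0 < β.re) (v w : ι → ℝ)
    (l : (ι → ℝ) →L[ℝ] ℂ) (u : ι → ℝ) :
    HasExpMoments (gaussianTerm A β v w) fun x => l (realVec x - u) := by
  intro α
  have hgrowth := (HasExpGrowth.exp_norm_clm (|α| • l)).comp_clm_sub (.id ℝ _) u
  refine (hgrowth.summable_mul_gaussianTerm hA hβ v w).norm.of_nonneg_of_le
    (fun _ => by positivity) fun x => ?_
  rw [norm_mul, norm_real, norm_of_nonneg (Real.exp_nonneg _), mul_comm,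
    _root_.smul_apply, norm_smul, norm_eq_abs, abs_abs, ContinuousLinearMap.id_apply]
  gcongr
  exact le_abs_self α

/-- The linear functional `y ↦ u · y`, with complex values. -/
def dotCLM (u : ι → ℝ) : (ι → ℝ) →L[ℝ] ℂ :=
  ofRealCLM ∘L LinearMap.toContinuousLinearMap (dotProductBilin ℝ ℝ u)

lemma dotCLM_apply (u y : ι → ℝ) : dotCLM u y = (u ⬝ᵥ y : ℝ) := rfl

lemma gaussianTerm_neg_add_smul (hA : A.PosDef) (β : ℂ) (u w : ι → ℝ) (t : ℝ) (x : ι → ℤ) :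
    gaussianTerm A β (-(w + t • u)) 0 x = cexp (-(π * β * quadForm A u) * t ^ 2) *
      (gaussianTerm A β (-w) 0 x *
        cexp (t * (2 * π * β * (u ⬝ᵥ A *ᵥ (realVec x - w) : ℝ)))) := by
  have hvec : realVec x + -(w + t • u) = (realVec x - w) + (-t) • u := by
    rw [neg_smul]; abel
  rw [gaussianTerm, gaussianTerm, hvec, quadForm_add hA.isHermitian, quadForm_smul, mulVec_smul,
    dotProduct_smul, dotProduct_mulVec_comm hA.isHermitian _ u, dotProduct_comm _ u, smul_eq_mul,
    ← sub_eq_add_neg, ← Complex.exp_add, ← Complex.exp_add]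
  push_cast
  ring_nf

variable [DecidableEq ι]

/-- `P` is homogeneous of degree `2j`, and the Poisson summation formula between the Gaussians of
`A⁻¹` and `A`, in dimension `2k`, holds with `P` inserted on both sides and without lower order
terms. -/
structure IsPoissonWeight (A : Matrix ι ι ℝ) (k j : ℕ) (P : (ι → ℝ) → ℂ) : Prop where
  homogeneous (t : ℝ) (y : ι → ℝ) : P (t • y) = (t : ℂ) ^ (2 * j) * P y
  hasExpGrowth : HasExpGrowth P
  poisson {σ : ℂ} (hσ : 0 < σ.re) (w : ι → ℝ) :
    ∑' y, P (realVec y) * gaussianTerm A⁻¹ σ 0 w y =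
      √A.det * (-1) ^ j * (1 / σ) ^ (k + 2 * j) *
        ∑' x, P (A *ᵥ (realVec x - w)) * gaussianTerm A σ⁻¹ (-w) 0 x

/-- `P` is homogeneous of degree `2`, and the Poisson summation formula with `P` inserted has a
lower order term proportional to `c`, the trace of `P` with respect to `A`. -/
structure IsQuadPoissonWeight (A : Matrix ι ι ℝ) (k : ℕ) (c : ℂ) (P : (ι → ℝ) → ℂ) : Prop where
  homogeneous (t : ℝ) (y : ι → ℝ) : P (t • y) = (t : ℂ) ^ 2 * P y
  hasExpGrowth : HasExpGrowth P
  poisson {σ : ℂ} (hσ : 0 < σ.re) (w : ι → ℝ) :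
    ∑' y, P (realVec y) * gaussianTerm A⁻¹ σ 0 w y =
      √A.det * (1 / σ) ^ k *
        (-(1 / σ) ^ 2 * (∑' x, P (A *ᵥ (realVec x - w)) * gaussianTerm A σ⁻¹ (-w) 0 x) +
          c / (2 * π * σ) * ∑' x, gaussianTerm A σ⁻¹ (-w) 0 x)

variable {k : ℕ} {c c' : ℂ}

lemma isPoissonWeight_one (hA : A.PosDef) (hk : Fintype.card ι = 2 * k) :
    IsPoissonWeight A k 0 fun _ => 1 where
  homogeneous := by simp
  hasExpGrowth := .const 1
  poisson {σ} hσ w := by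
    have hdet : 1 / (√(A⁻¹).det : ℂ) = √A.det := by
      rw [det_nonsing_inv, Ring.inverse_eq_inv', Real.sqrt_inv, ofReal_inv, one_div, inv_inv]
    have hpow : (1 / σ ^ (1 / 2 : ℂ)) ^ Fintype.card ι = (1 / σ) ^ k := by
      rw [hk, pow_mul, div_pow, one_pow, ← cpow_nat_mul, Nat.cast_ofNat,
        mul_one_div_cancel two_ne_zero, cpow_one]
    have hinv : A⁻¹⁻¹ = A := nonsing_inv_nonsing_inv A hA.det_pos.ne'.isUnit
    have h := poissonGaussian_of_posDef hA.inv σ hσ 0 w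
    rw [hdet, hpow, hinv] at h
    simpa using h

namespace IsQuadPoissonWeight

lemma add (hA : A.PosDef) (h : IsQuadPoissonWeight A k c P) (h' : IsQuadPoissonWeight A k c' P') :
    IsQuadPoissonWeight A k (c + c') fun y => P y + P' y where
  homogeneous t y := by rw [h.homogeneous, h'.homogeneous, mul_add]
  hasExpGrowth := h.hasExpGrowth.add h'.hasExpGrowth
  poisson {σ} hσ w := by
    simp only [add_mul]
    rw [(h.hasExpGrowth.summable_mul_gaussianTerm hA.inv hσ 0 w).tsum_add
      (h'.hasExpGrowth.summable_mul_gaussianTerm hA.inv hσ 0 w),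
      (h.hasExpGrowth.summable_mulVec_mul_gaussianTerm hA (re_inv_pos hσ) A w _ _).tsum_add
      (h'.hasExpGrowth.summable_mulVec_mul_gaussianTerm hA (re_inv_pos hσ) A w _ _),
      h.poisson hσ, h'.poisson hσ]
    ring

lemma const_mul (h : IsQuadPoissonWeight A k c P) (z : ℂ) :
    IsQuadPoissonWeight A k (z * c) fun y => z * P y where
  homogeneous t y := by rw [h.homogeneous, mul_left_comm]
  hasExpGrowth := h.hasExpGrowth.const_mul z
  poisson {σ} hσ w := by
    simp only [mul_assoc z, tsum_mul_left, h.poisson hσ]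
    ring

lemma sum (hA : A.PosDef) {κ : Type*} (s : Finset κ) {c : κ → ℂ} {P : κ → (ι → ℝ) → ℂ}
    (h : ∀ i ∈ s, IsQuadPoissonWeight A k (c i) (P i)) :
    IsQuadPoissonWeight A k (∑ i ∈ s, c i) fun y => ∑ i ∈ s, P i y := by
  classical
  induction s using Finset.induction_on with
  | empty => exact ⟨by simp, by simpa using .const 0, by simp⟩
  | insert i s hi ih =>
    simp only [Finset.sum_insert hi]
    exact (h i (by simp)).add hA (ih fun j hj => h j (by simp [hj]))

/-- Compare second derivatives at `t = 0` in the formula with constant weight and shift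
`w + t u`. -/
lemma tsum_gaussianTerm_mul_dotProduct_sq (hA : A.PosDef) (hk : Fintype.card ι = 2 * k)
    {σ : ℂ} (hσ : 0 < σ.re) (u w : ι → ℝ) :
    ∑' y, gaussianTerm A⁻¹ σ 0 w y * (2 * π * I * (u ⬝ᵥ realVec y : ℝ)) ^ 2 =
      ∑' x, √A.det * (1 / σ) ^ k * gaussianTerm A σ⁻¹ (-w) 0 x *
          (2 * π * σ⁻¹ * (u ⬝ᵥ A *ᵥ (realVec x - w) : ℝ)) ^ 2 -
        2 * (π * σ⁻¹ * quadForm A u) *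
          ∑' x, √A.det * (1 / σ) ^ k * gaussianTerm A σ⁻¹ (-w) 0 x := by
  have hleft := hasExpMoments_gaussianTerm hA.inv hσ 0 w ((2 * π * I : ℂ) • dotCLM u) 0
  have hright := (hasExpMoments_gaussianTerm hA (re_inv_pos hσ) (-w) 0
    ((2 * π * σ⁻¹ : ℂ) • (dotCLM u ∘L LinearMap.toContinuousLinearMap A.mulVecLin)) w).const_mul
      (√A.det * (1 / σ) ^ k)
  have hshift (t : ℝ) (y : ι → ℤ) : gaussianTerm A⁻¹ σ 0 (w + t • u) y =
      gaussianTerm A⁻¹ σ 0 w y * cexp (t * (2 * π * I * (u ⬝ᵥ realVec y : ℝ))) := by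
    rw [gaussianTerm, gaussianTerm, ← Complex.exp_add, add_dotProduct, smul_dotProduct, smul_eq_mul]
    push_cast
    ring_nf
  have key := hleft.tsum_mul_sq_eq hright (a := π * σ⁻¹ * quadForm A u) fun t => by
    have h := (isPoissonWeight_one hA hk).poisson hσ (w + t • u)
    simp only [one_mul, pow_zero, mul_one, mul_zero, add_zero, hshift,
      gaussianTerm_neg_add_smul hA, tsum_mul_left] at h
    simpa [dotCLM_apply, mul_assoc, tsum_mul_left, mul_left_comm] using h
  simpa only [sub_zero] using! key

lemma dotProduct_sq (hA : A.PosDef) (hk : Fintype.card ι = 2 * k) (u : ι → ℝ) :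
    IsQuadPoissonWeight A k (quadForm A u) fun y => ((u ⬝ᵥ y : ℝ) : ℂ) ^ 2 where
  homogeneous t y := by rw [dotProduct_smul, smul_eq_mul, ofReal_mul, mul_pow]
  hasExpGrowth := by
    simpa only [pow_two, dotCLM_apply] using
      (HasExpGrowth.clm (dotCLM u)).mul (HasExpGrowth.clm (dotCLM u))
  poisson {σ} hσ w := by
    have hσ0 : σ ≠ 0 := by rintro rfl; simp at hσ
    have hπ : (π : ℂ) ≠ 0 := ofReal_ne_zero.mpr pi_ne_zero
    have hsq_left (y : ι → ℤ) : gaussianTerm A⁻¹ σ 0 w y * (2 * π * I * (u ⬝ᵥ realVec y : ℝ)) ^ 2 =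
        -4 * π ^ 2 * (((u ⬝ᵥ realVec y : ℝ) : ℂ) ^ 2 * gaussianTerm A⁻¹ σ 0 w y) := by
      rw [mul_pow, mul_pow, I_sq]
      ring
    have hsq_right (x : ι → ℤ) : √A.det * (1 / σ) ^ k * gaussianTerm A σ⁻¹ (-w) 0 x *
        (2 * π * σ⁻¹ * (u ⬝ᵥ A *ᵥ (realVec x - w) : ℝ)) ^ 2 =
          √A.det * (1 / σ) ^ k * (4 * π ^ 2 / σ ^ 2) *
            (((u ⬝ᵥ A *ᵥ (realVec x - w) : ℝ) : ℂ) ^ 2 * gaussianTerm A σ⁻¹ (-w) 0 x) := by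
      ring
    have key := tsum_gaussianTerm_mul_dotProduct_sq hA hk hσ u w
    simp only [hsq_left, hsq_right, tsum_mul_left] at key
    refine mul_left_cancel₀ (mul_ne_zero (by norm_num : (-4 : ℂ) ≠ 0) (pow_ne_zero 2 hπ)) ?_
    rw [key]
    field_simp
    ring

lemma mul_apply (hA : A.PosDef) (hk : Fintype.card ι = 2 * k) (i j : ι) :
    IsQuadPoissonWeight A k (A i j) fun y => (y i : ℂ) * (y j : ℂ) := by
  have hpolar (u v : ι → ℝ) : IsQuadPoissonWeight A k (u ⬝ᵥ A *ᵥ v : ℝ)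
      fun y => ((u ⬝ᵥ y : ℝ) : ℂ) * ((v ⬝ᵥ y : ℝ) : ℂ) := by
    convert ((dotProduct_sq hA hk (u + v)).const_mul (1 / 4)).add hA
      ((dotProduct_sq hA hk (u + (-1 : ℝ) • v)).const_mul (-1 / 4)) using 1
    · rw [quadForm_add hA.isHermitian, quadForm_add hA.isHermitian, quadForm_smul, mulVec_smul,
        dotProduct_smul, smul_eq_mul]
      push_cast
      ring
    · ext y
      simp only [add_dotProduct, smul_dotProduct, smul_eq_mul]
      push_cast
      ring
  simpa using hpolar (Pi.single i 1) (Pi.single j 1)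

end IsQuadPoissonWeight

/-- The quadratic form `y ↦ ∑ᵢⱼ Hᵢⱼ yᵢ yⱼ`, as a weight of a theta series. -/
def quadWeight (H : Matrix ι ι ℝ) (y : ι → ℝ) : ℂ := (quadForm H y : ℝ)

/-- The hypothesis says that the quadratic form of `H` is harmonic for the metric of `A`. -/
lemma isPoissonWeight_quadWeight (hA : A.PosDef) (hk : Fintype.card ι = 2 * k)
    {H : Matrix ι ι ℝ} (hH : ∑ i, ∑ j, H i j * A i j = 0) :
    IsPoissonWeight A k 1 (quadWeight H) := by
  have hquad : IsQuadPoissonWeight A k (∑ i, ∑ j, (H i j : ℂ) * A i j) (quadWeight H) := by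
    have hsum : quadWeight H = fun y => ∑ i, ∑ j, (H i j : ℂ) * ((y i : ℂ) * (y j : ℂ)) := by
      ext y
      simp only [quadWeight, quadForm, dotProduct, mulVec, ofReal_sum, ofReal_mul, Finset.mul_sum]
      exact Finset.sum_congr rfl fun i _ => Finset.sum_congr rfl fun j _ => by ring
    rw [hsum]
    exact .sum hA _ fun i _ => .sum hA _ fun j _ =>
      (IsQuadPoissonWeight.mul_apply hA hk i j).const_mul _
  have htrace : ∑ i, ∑ j, (H i j : ℂ) * A i j = 0 := by exact_mod_cast hH
  refine ⟨hquad.homogeneous, hquad.hasExpGrowth, fun {σ} hσ w => ?_⟩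
  rw [hquad.poisson hσ, htrace]
  ring

end PoissonWeights

/-! ### Even lattices and the transformation of their theta series -/

section ModVec

open Matrix

variable {ι : Type*}

/-- The reduction modulo `c` of an integer vector. -/
def modVec (c : ℕ) (x : ι → ℤ) : ι → ZMod c := fun i => x i

/-- The standard integer vector lifting a vector modulo `c`. -/
def liftVec {c : ℕ} (s : ι → ZMod c) : ι → ℤ := fun i => (s i).cast

lemma modVec_liftVec {c : ℕ} (s : ι → ZMod c) : modVec c (liftVec s) = s := by
  ext i; simp [modVec, liftVec]

lemma modVec_add (c : ℕ) (x y : ι → ℤ) : modVec c (x + y) = modVec c x + modVec c y := by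
  ext i; simp [modVec]

lemma modVec_natCast_smul (c : ℕ) (x : ι → ℤ) : modVec c ((c : ℤ) • x) = 0 := by
  ext i; simp [modVec]

lemma modVec_dotProduct_modVec [Fintype ι] (c : ℕ) (x y : ι → ℤ) :
    modVec c x ⬝ᵥ modVec c y = (x ⬝ᵥ y : ℤ) := by
  simp [modVec, dotProduct]

lemma liftVec_modVec_add (c : ℕ) (x : ι → ℤ) :
    liftVec (modVec c x) + (c : ℤ) • (fun i => x i / c) = x := by
  ext i
  simpa [liftVec, modVec, ZMod.coe_intCast] using Int.emod_add_mul_ediv (x i) c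

/-- Division with remainder by `c` in each coordinate. -/
def divModEquiv (ι : Type*) (c : ℕ) [NeZero c] : (ι → ℤ) ≃ (ι → ZMod c) × (ι → ℤ) where
  toFun x := (modVec c x, fun i => x i / c)
  invFun p := liftVec p.1 + (c : ℤ) • p.2
  left_inv := liftVec_modVec_add c
  right_inv p := by
    have hc : (0 : ℤ) < c := by exact_mod_cast Nat.pos_of_ne_zero (NeZero.ne c)
    refine Prod.ext ?_ (funext fun i => ?_)
    · change modVec c (_ + _) = _
      rw [modVec_add, modVec_liftVec, modVec_natCast_smul, add_zero]
    · simp only [liftVec, ZMod.cast_eq_val, Pi.add_apply, Pi.smul_apply, smul_eq_mul]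
      rw [Int.add_mul_ediv_left _ _ hc.ne', Int.ediv_eq_zero_of_lt (by positivity)
        (by exact_mod_cast ZMod.val_lt _), zero_add]

end ModVec

section EvenLattice

open Complex Real Matrix

/-- An even positive definite integral lattice `ℤ^ι` of rank `2k`, given by its Gram matrix, with
odd level dividing `D` and with determinant `D^k`. The matrix `dualGram` is `D` times the inverse
of the Gram matrix. -/
structure EvenLattice (ι : Type*) [Fintype ι] [DecidableEq ι] (k D : ℕ) where
  gram : Matrix ι ι ℤ
  dualGram : Matrix ι ι ℤ
  card_eq : Fintype.card ι = 2 * k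
  odd_level : Odd D
  gram_mul_dualGram : gram * dualGram = (D : ℤ) • 1
  posDef : (gram.map (Int.cast : ℤ → ℝ)).PosDef
  even (x : ι → ℤ) : Even (x ⬝ᵥ gram *ᵥ x)
  det_gram : gram.det = (D : ℤ) ^ k

namespace EvenLattice

variable {ι : Type*} [Fintype ι] [DecidableEq ι] {k D : ℕ} (L : EvenLattice ι k D)

/-- The Gram matrix, with real entries. -/
def realGram : Matrix ι ι ℝ := L.gram.map Int.cast

/-- The integral quadratic form of the lattice, half of its norm form. -/
def q (x : ι → ℤ) : ℤ := x ⬝ᵥ L.gram *ᵥ x / 2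

lemma two_mul_q (x : ι → ℤ) : 2 * L.q x = x ⬝ᵥ L.gram *ᵥ x :=
  Int.two_mul_ediv_two_of_even (L.even x)

lemma isSymm_gram : L.gram.IsSymm := by
  ext i j
  simpa using L.posDef.isHermitian.apply i j

lemma dotProduct_gram_mulVec_comm (x y : ι → ℤ) : x ⬝ᵥ L.gram *ᵥ y = y ⬝ᵥ L.gram *ᵥ x := by
  rw [dotProduct_mulVec, ← mulVec_transpose, L.isSymm_gram.eq, dotProduct_comm]

lemma posDef_realGram : L.realGram.PosDef := L.posDef

lemma realGram_mulVec_realVec (x : ι → ℤ) : L.realGram *ᵥ realVec x = realVec (L.gram *ᵥ x) := by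
  ext i
  simp [realGram, mulVec, dotProduct, realVec]

lemma quadForm_realVec (x : ι → ℤ) : quadForm L.realGram (realVec x) = 2 * L.q x := by
  rw [realGram, quadForm_map_intCast_realVec, ← two_mul_q]
  push_cast
  rfl

lemma q_add (x y : ι → ℤ) : L.q (x + y) = L.q x + x ⬝ᵥ L.gram *ᵥ y + L.q y := by
  have h := L.two_mul_q (x + y)
  simp only [mulVec_add, dotProduct_add, add_dotProduct, ← L.two_mul_q,
    L.dotProduct_gram_mulVec_comm y x] at h
  lia

lemma q_smul (t : ℤ) (x : ι → ℤ) : L.q (t • x) = t ^ 2 * L.q x := by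
  have h := L.two_mul_q (t • x)
  simp only [mulVec_smul, dotProduct_smul, smul_dotProduct, smul_eq_mul, ← L.two_mul_q] at h
  linarith

/-- The quadratic form of the lattice modulo `c`. -/
def qMod {c : ℕ} (s : ι → ZMod c) : ZMod c := L.q (liftVec s)

lemma qMod_modVec (c : ℕ) (x : ι → ℤ) : L.qMod (modVec c x) = L.q x := by
  conv_rhs => rw [← liftVec_modVec_add c x, q_add, q_smul, mulVec_smul, dotProduct_smul]
  simp [qMod]

/-- The Gauss sum `∑ e((a q(s) - y · s) / c)` over the vectors `s` modulo `c`. -/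
def quadGaussSum {c : ℕ} [NeZero c] (a : ZMod c) (y : ι → ZMod c) : ℂ :=
  ∑ s, ZMod.stdAddChar (a * L.qMod s - y ⬝ᵥ s)

/-- The theta series of the lattice weighted by `P`. The weight is evaluated at the coordinates
of `x` in the dual lattice. -/
def theta (P : (ι → ℝ) → ℂ) (τ : ℂ) : ℂ :=
  ∑' x : ι → ℤ, P (L.realGram *ᵥ realVec x) * cexp (2 * π * I * L.q x * τ)

/-- The series over the dual lattice that describes the theta series at the cusp `a / c`. -/
def cuspSum (P : (ι → ℝ) → ℂ) {c : ℕ} [NeZero c] (a : ZMod c) (σ : ℂ) : ℂ :=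
  ∑' y : ι → ℤ, P (realVec y) * L.quadGaussSum a (modVec c y) *
    cexp (-π * σ * quadForm L.realGram⁻¹ (realVec y))

lemma summable_theta {P : (ι → ℝ) → ℂ} (hP : HasExpGrowth P) {τ : ℂ} (hτ : 0 < τ.im) :
    Summable fun x : ι → ℤ => P (L.realGram *ᵥ realVec x) * cexp (2 * π * I * L.q x * τ) := by
  have h := hP.summable_mulVec_mul_gaussianTerm L.posDef_realGram (β := -I * τ) (by simpa)
    L.realGram 0 0 0
  refine h.congr fun x => ?_
  rw [gaussianTerm, sub_zero, add_zero, quadForm_realVec, zero_dotProduct]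
  congr 2
  push_cast
  ring

variable {P : (ι → ℝ) → ℂ} {j c : ℕ} [NeZero c] {σ : ℂ}

lemma cexp_q_mul_eq (a : ℤ) (σ : ℂ) (s : ι → ZMod c) (z : ι → ℤ) :
    cexp (2 * π * I * L.q (liftVec s + (c : ℤ) • z) * (a / c + I * σ⁻¹ / c ^ 2)) =
      ZMod.stdAddChar ((a : ZMod c) * L.qMod s) *
        gaussianTerm L.realGram σ⁻¹ ((c : ℝ)⁻¹ • realVec (liftVec s)) 0 z := by
  have hc : (c : ℝ) ≠ 0 := by exact_mod_cast NeZero.ne c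
  have hc' : (c : ℂ) ≠ 0 := by exact_mod_cast NeZero.ne c
  set x := liftVec s + (c : ℤ) • z with hx
  have hmod : modVec c x = s := congrArg Prod.fst ((divModEquiv ι c).apply_symm_apply (s, z))
  have hvec : realVec z + (c : ℝ)⁻¹ • realVec (liftVec s) = (c : ℝ)⁻¹ • realVec x := by
    rw [hx, realVec_add, realVec_zsmul, smul_add, smul_smul, Int.cast_natCast,
      inv_mul_cancel₀ hc, one_smul, add_comm]
  rw [gaussianTerm, hvec, quadForm_smul, quadForm_realVec, zero_dotProduct, ← hmod, qMod_modVec,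
    ← Int.cast_mul, ZMod.stdAddChar_coe, ← Complex.exp_add]
  congr 1
  push_cast
  field_simp
  linear_combination L.q x * σ⁻¹ * I_sq

/-- Split the lattice into classes modulo `c`, on which `e(a q(x) / c)` is constant. -/
lemma theta_ratCast_add_eq_sum (hP : IsPoissonWeight L.realGram k j P) (a : ℤ) (hσ : 0 < σ.re) :
    L.theta P (a / c + I * σ⁻¹ / c ^ 2) =
      c ^ (2 * j) * ∑ s : ι → ZMod c, ZMod.stdAddChar ((a : ZMod c) * L.qMod s) *
        ∑' z, P (L.realGram *ᵥ (realVec z + (c : ℝ)⁻¹ • realVec (liftVec s))) *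
          gaussianTerm L.realGram σ⁻¹ ((c : ℝ)⁻¹ • realVec (liftVec s)) 0 z := by
  have hc : (c : ℝ) ≠ 0 := by exact_mod_cast NeZero.ne c
  have him : 0 < (a / c + I * σ⁻¹ / c ^ 2 : ℂ).im := by
    have h : (a / c + I * σ⁻¹ / c ^ 2 : ℂ) = (a / c : ℝ) + ((c : ℝ)⁻¹ ^ 2 : ℝ) * (I * σ⁻¹) := by
      push_cast
      ring
    have hσ' := re_inv_pos hσ
    rw [h, add_im, ofReal_im, im_ofReal_mul, I_mul_im, zero_add]
    positivity
  have hsum := L.summable_theta hP.hasExpGrowth him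
  have hsum' := (divModEquiv ι c).symm.summable_iff.mpr hsum
  simp only [Function.comp_def] at hsum'
  rw [theta, ← (divModEquiv ι c).symm.tsum_eq, hsum'.tsum_prod, tsum_fintype, Finset.mul_sum]
  refine Finset.sum_congr rfl fun s _ => ?_
  rw [← tsum_mul_left, ← tsum_mul_left]
  refine tsum_congr fun z => ?_
  have hvec : realVec (liftVec s + (c : ℤ) • z) =
      (c : ℝ) • (realVec z + (c : ℝ)⁻¹ • realVec (liftVec s)) := by
    rw [realVec_add, realVec_zsmul, smul_add, smul_inv_smul₀ hc, Int.cast_natCast, add_comm]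
  change P (L.realGram *ᵥ realVec (liftVec s + (c : ℤ) • z)) *
    cexp (2 * π * I * L.q (liftVec s + (c : ℤ) • z) * _) = _
  rw [hvec, mulVec_smul, hP.homogeneous, cexp_q_mul_eq, ofReal_natCast]
  ring

lemma gaussianTerm_inv_realGram (σ : ℂ) (s : ι → ZMod c) (y : ι → ℤ) :
    gaussianTerm L.realGram⁻¹ σ 0 (-((c : ℝ)⁻¹ • realVec (liftVec s))) y =
      ZMod.stdAddChar (-(modVec c y ⬝ᵥ s)) *
        cexp (-π * σ * quadForm L.realGram⁻¹ (realVec y)) := by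
  have hdot : realVec (liftVec s) ⬝ᵥ realVec y = (y ⬝ᵥ liftVec s : ℤ) := by
    rw [dotProduct_comm y]
    simp [realVec, dotProduct]
  have hmod : modVec c y ⬝ᵥ s = (y ⬝ᵥ liftVec s : ℤ) := by
    rw [← modVec_dotProduct_modVec, modVec_liftVec]
  rw [gaussianTerm, add_zero, neg_dotProduct, smul_dotProduct, hdot, hmod, ← Int.cast_neg,
    ZMod.stdAddChar_coe, ← Complex.exp_add, smul_eq_mul]
  congr 1
  push_cast
  ring

lemma cuspSum_eq_sum (hP : HasExpGrowth P) (a : ZMod c) (hσ : 0 < σ.re) :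
    L.cuspSum P a σ = ∑ s, ZMod.stdAddChar (a * L.qMod s) * ∑' y, P (realVec y) *
      gaussianTerm L.realGram⁻¹ σ 0 (-((c : ℝ)⁻¹ • realVec (liftVec s))) y := by
  have hsum (s : ι → ZMod c) := (hP.summable_mul_gaussianTerm L.posDef_realGram.inv hσ 0
    (-((c : ℝ)⁻¹ • realVec (liftVec s)))).mul_left (ZMod.stdAddChar (a * L.qMod s))
  simp only [← tsum_mul_left]
  rw [← Summable.tsum_finsetSum fun s _ => hsum s, cuspSum]
  refine tsum_congr fun y => ?_
  rw [quadGaussSum, mul_right_comm, Finset.mul_sum]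
  refine Finset.sum_congr rfl fun s _ => ?_
  rw [gaussianTerm_inv_realGram, sub_eq_add_neg, AddChar.map_add_eq_mul]
  ring

lemma theta_ratCast_add_eq_cuspSum (hP : IsPoissonWeight L.realGram k j P) (a : ℤ)
    (hσ : 0 < σ.re) :
    L.theta P (a / c + I * σ⁻¹ / c ^ 2) =
      c ^ (2 * j) * (-1) ^ j * σ ^ (k + 2 * j) * (√L.realGram.det : ℂ)⁻¹ *
        L.cuspSum P (a : ZMod c) σ := by
  have hσ0 : σ ≠ 0 := by rintro rfl; simp at hσ
  have hdet : (√L.realGram.det : ℂ) ≠ 0 := by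
    exact_mod_cast (Real.sqrt_pos.mpr L.posDef_realGram.det_pos).ne'
  have hcancel : (-1) ^ j * σ ^ (k + 2 * j) * (√L.realGram.det : ℂ)⁻¹ *
      (√L.realGram.det * (-1) ^ j * (1 / σ) ^ (k + 2 * j)) = 1 := by
    have hsign : ((-1 : ℂ) ^ j) * (-1) ^ j = 1 := by rw [← mul_pow]; simp
    rw [one_div, inv_pow]
    field_simp
    rw [sq, hsign]
  rw [L.theta_ratCast_add_eq_sum hP a hσ, L.cuspSum_eq_sum hP.hasExpGrowth _ hσ, Finset.mul_sum,
    Finset.mul_sum]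
  refine Finset.sum_congr rfl fun s _ => ?_
  have hpoisson := hP.poisson hσ (-((c : ℝ)⁻¹ • realVec (liftVec s)))
  simp only [sub_neg_eq_add, neg_neg] at hpoisson
  rw [hpoisson]
  linear_combination (-(c : ℂ) ^ (2 * j) * ZMod.stdAddChar ((a : ZMod c) * L.qMod s) *
    ∑' z, P (L.realGram *ᵥ (realVec z + (c : ℝ)⁻¹ • realVec (liftVec s))) *
      gaussianTerm L.realGram σ⁻¹ ((c : ℝ)⁻¹ • realVec (liftVec s)) 0 z) * hcancel

/-- Poisson summation in each class modulo `c`; the phases add up to Gauss sums. -/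
lemma theta_moebius_eq_cuspSum (hP : IsPoissonWeight L.realGram k j P) {a b d : ℤ}
    (hdet : a * d - b * c = 1) {τ : ℂ} (hτ : 0 < τ.im) :
    L.theta P ((a * τ + b) / (c * τ + d)) = (c * τ + d) ^ (k + 2 * j) *
      ((1 / (I * c)) ^ k * (√L.realGram.det : ℂ)⁻¹ *
        L.cuspSum P (a : ZMod c) (-I * (τ + d / c))) := by
  have hc : (c : ℂ) ≠ 0 := by exact_mod_cast NeZero.ne c
  set σ : ℂ := -I * (τ + d / c) with hσ
  have hσre : 0 < σ.re := by
    have h : ((d : ℂ) / c).im = 0 := by exact_mod_cast ofReal_im (d / c)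
    simpa [hσ, h] using hτ
  have hσ0 : σ ≠ 0 := by rintro h; simp [h] at hσre
  have hJ : (c * τ + d : ℂ) = I * c * σ := by
    rw [hσ]
    field_simp
    linear_combination (c * τ + d) * I_sq
  have hmoebius : (a * τ + b) / (c * τ + d) = a / c + I * σ⁻¹ / c ^ 2 := by
    have h : (a * d - b * c : ℂ) = 1 := by exact_mod_cast hdet
    have hJ0 : (c * τ + d : ℂ) ≠ 0 := by simp [hJ, hc, hσ0]
    rw [div_eq_iff hJ0]
    field_simp
    linear_combination -(c * σ * h) - I * hJ - c * σ * I_sq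
  have hpow : (I * c * σ) ^ (k + 2 * j) * (1 / (I * c)) ^ k =
      c ^ (2 * j) * (-1) ^ j * σ ^ (k + 2 * j) := by
    have hIc : (I * c : ℂ) ≠ 0 := mul_ne_zero I_ne_zero hc
    rw [mul_pow (I * c : ℂ), pow_add (I * c : ℂ), pow_mul (I * c : ℂ) 2, mul_pow I _ 2, I_sq,
      one_div, inv_pow, mul_pow (-1 : ℂ), ← pow_mul]
    field_simp
  rw [hmoebius, L.theta_ratCast_add_eq_cuspSum hP a hσre, hJ]
  linear_combination -(√L.realGram.det : ℂ)⁻¹ * L.cuspSum P (a : ZMod c) σ * hpow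

end EvenLattice

end EvenLattice

/-! ### Gauss sums and cusp expansions -/

section CuspExpansions

open Complex Real Matrix Filter Topology

namespace EvenLattice

variable {ι : Type*} [Fintype ι] [DecidableEq ι] {k D : ℕ} (L : EvenLattice ι k D)
  {P : (ι → ℝ) → ℂ} {j c : ℕ}

lemma qMod_add_modVec (s : ι → ZMod c) (x : ι → ℤ) :
    L.qMod (s + modVec c x) = L.qMod s + s ⬝ᵥ modVec c (L.gram *ᵥ x) + L.q x := by
  conv_lhs => rw [← modVec_liftVec s, ← modVec_add, qMod_modVec, q_add]
  conv_rhs => rw [← modVec_liftVec s, modVec_dotProduct_modVec, qMod_modVec]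
  push_cast
  rfl

variable [NeZero c]

lemma norm_quadGaussSum_le (a : ZMod c) (y : ι → ZMod c) :
    ‖L.quadGaussSum a y‖ ≤ Fintype.card (ι → ZMod c) :=
  (norm_sum_le _ _).trans (by simp)

lemma quadGaussSum_one (a : ZMod 1) (y : ι → ZMod 1) : L.quadGaussSum a y = 1 := by
  rw [quadGaussSum, Fintype.sum_unique, Subsingleton.elim (a * _ - _) 0, AddChar.map_zero_eq_one]

lemma quadForm_inv_realVec_pos {y : ι → ℤ} (hy : y ≠ 0) :
    0 < quadForm L.realGram⁻¹ (realVec y) := by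
  refine quadForm_pos L.posDef_realGram.inv fun h => hy (funext fun i => ?_)
  simpa [realVec] using congrFun h i

lemma norm_cexp_neg_pi_mul (σ : ℂ) (r : ℝ) : ‖cexp (-π * σ * r)‖ = rexp (-(π * r * σ.re)) := by
  rw [norm_exp]
  congr 1
  simp [mul_right_comm]

/-- Only the term `y = 0` survives in the limit. -/
lemma tendsto_cuspSum (hP : HasExpGrowth P) (a : ZMod c) :
    Tendsto (L.cuspSum P a) (comap re atTop) (𝓝 (P 0 * L.quadGaussSum a 0)) := by
  have hzero : realVec (0 : ι → ℤ) = 0 := by ext i; simp [realVec]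
  have hmod : modVec c (0 : ι → ℤ) = 0 := by ext i; simp [modVec]
  have hbound := (hP.summable L.posDef_realGram.inv pi_pos 0).norm.mul_left
    (Fintype.card (ι → ZMod c) : ℝ)
  rw [← tsum_ite_eq (0 : ι → ℤ) fun _ => P 0 * L.quadGaussSum a 0]
  refine tendsto_tsum_of_dominated_convergence hbound (fun y => ?_) ?_
  · obtain rfl | hy := eq_or_ne y 0
    · simpa [hzero, hmod, quadForm_zero] using tendsto_const_nhds
    · rw [if_neg hy, tendsto_zero_iff_norm_tendsto_zero]
      simp only [norm_mul, norm_cexp_neg_pi_mul]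
      rw [← mul_zero (‖P (realVec y)‖ * ‖L.quadGaussSum a (modVec c y)‖)]
      refine .const_mul _ (tendsto_exp_neg_atTop_nhds_zero.comp ?_)
      exact tendsto_comap.const_mul_atTop (mul_pos pi_pos (L.quadForm_inv_realVec_pos hy))
  · filter_upwards [tendsto_comap.eventually (eventually_ge_atTop 1)] with σ hσ y
    have hq : 0 ≤ π * quadForm L.realGram⁻¹ (realVec y) := by
      obtain rfl | hy := eq_or_ne y 0
      · simp [hzero, quadForm_zero]
      · exact (mul_pos pi_pos (L.quadForm_inv_realVec_pos hy)).le
    rw [norm_mul, norm_mul, norm_cexp_neg_pi_mul, mul_comm ‖P _‖, mul_assoc, norm_mul, norm_real,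
      norm_of_nonneg (Real.exp_nonneg _), sub_zero]
    gcongr
    · exact L.norm_quadGaussSum_le _ _
    · nlinarith

lemma dualGram_mul_gram : L.dualGram * L.gram = (D : ℤ) • 1 := by
  have hdet : L.gram.det ≠ 0 := by
    rw [L.det_gram]
    exact pow_ne_zero _ (by exact_mod_cast L.odd_level.pos.ne')
  have h : L.gram * (L.dualGram * L.gram) = L.gram * ((D : ℤ) • 1) := by
    rw [← mul_assoc, L.gram_mul_dualGram, Matrix.smul_mul, Matrix.mul_smul, one_mul, mul_one]
  have hadj := congrArg (L.gram.adjugate * ·) h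
  simp only [← mul_assoc, adjugate_mul, Matrix.smul_mul, one_mul] at hadj
  exact smul_right_injective _ hdet hadj

lemma gram_mulVec_injective : Function.Injective L.gram.mulVec := by
  intro x y h
  have hdual := congrArg L.dualGram.mulVec h
  simp only [mulVec_mulVec, L.dualGram_mul_gram, smul_mulVec, one_mulVec] at hdual
  exact smul_right_injective _ (by exact_mod_cast L.odd_level.pos.ne') hdual

/-- Oddness of `D` removes the factor `2` between `q` and the norm form. -/
lemma dvd_q_dualGram_mulVec (t : ι → ℤ) : (D : ℤ) ∣ L.q (L.dualGram *ᵥ t) := by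
  have h := L.two_mul_q (L.dualGram *ᵥ t)
  rw [mulVec_mulVec, L.gram_mul_dualGram, smul_mulVec, one_mulVec, dotProduct_smul,
    smul_eq_mul] at h
  have hcop : IsCoprime (D : ℤ) 2 :=
    Int.isCoprime_iff_gcd_eq_one.mpr (Nat.coprime_two_right.mpr L.odd_level)
  exact hcop.dvd_of_dvd_mul_left ⟨_, h⟩

lemma mem_range_gram_mulVec {y : ι → ℤ} (h : ∀ t, (D : ℤ) ∣ y ⬝ᵥ L.dualGram *ᵥ t) :
    y ∈ Set.range L.gram.mulVec := by
  choose x hx using fun i => h (Pi.single i 1)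
  have hdual : y ᵥ* L.dualGram = (D : ℤ) • x := by
    ext i
    have h := hx i
    rwa [dotProduct_mulVec, dotProduct_single_one] at h
  have hgram := congrArg (· ᵥ* L.gram) hdual
  simp only [vecMul_vecMul, L.dualGram_mul_gram, vecMul_smul, vecMul_one, smul_vecMul] at hgram
  refine ⟨x, ?_⟩
  rw [smul_right_injective _ (by exact_mod_cast L.odd_level.pos.ne' : (D : ℤ) ≠ 0) hgram,
    ← mulVec_transpose, L.isSymm_gram.eq]

/-- Completing the square. -/
lemma quadGaussSum_gram_mulVec {a : ZMod c} {d : ℤ} (had : a * d = 1) (x : ι → ℤ) :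
    L.quadGaussSum a (modVec c (L.gram *ᵥ x)) =
      ZMod.stdAddChar (-(d * L.q x : ZMod c)) * L.quadGaussSum a 0 := by
  rw [quadGaussSum, ← Equiv.sum_comp (Equiv.addRight (modVec c (d • x))), quadGaussSum,
    Finset.mul_sum]
  refine Finset.sum_congr rfl fun s _ => ?_
  have hsmul (y : ι → ℤ) : modVec c (d • y) = (d : ZMod c) • modVec c y := by ext; simp [modVec]
  have hq : modVec c (L.gram *ᵥ x) ⬝ᵥ modVec c x = 2 * L.q x := by
    rw [modVec_dotProduct_modVec, dotProduct_comm, ← L.two_mul_q]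
    push_cast
    rfl
  rw [← AddChar.map_add_eq_mul, Equiv.coe_addRight, qMod_add_modVec, q_smul, mulVec_smul, hsmul,
    hsmul, dotProduct_add, dotProduct_smul, dotProduct_smul, hq, zero_dotProduct, dotProduct_comm s]
  congr 1
  push_cast
  simp only [smul_eq_mul]
  linear_combination (modVec c (L.gram *ᵥ x) ⬝ᵥ s + d * L.q x) * had

/-- Shifting the summation variable by `(c / D) N t`, with `N` the dual Gram matrix, multiplies
the Gauss sum by `e(-y · N t / D)`. -/
lemma quadGaussSum_eq_zero (hDc : D ∣ c) (a : ZMod c) {y : ι → ℤ}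
    (hy : y ∉ Set.range L.gram.mulVec) : L.quadGaussSum a (modVec c y) = 0 := by
  by_contra hG
  refine hy (L.mem_range_gram_mulVec fun t => ?_)
  obtain ⟨e, he⟩ := hDc
  have hce : (c : ℤ) = e * D := by rw [he]; push_cast; ring
  have he0 : (e : ℤ) ≠ 0 := by
    rintro h
    exact NeZero.ne c (by simpa [h] using hce)
  have hgram : modVec c (L.gram *ᵥ ((e : ℤ) • L.dualGram *ᵥ t)) = 0 := by
    rw [mulVec_smul, mulVec_mulVec, L.gram_mul_dualGram, smul_mulVec, one_mulVec, smul_smul, ← hce,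
      modVec_natCast_smul]
  have hq : (L.q ((e : ℤ) • L.dualGram *ᵥ t) : ZMod c) = 0 := by
    obtain ⟨m, hm⟩ := L.dvd_q_dualGram_mulVec t
    rw [q_smul, hm, ZMod.intCast_zmod_eq_zero_iff_dvd, hce]
    exact ⟨e * m, by ring⟩
  have hshift : L.quadGaussSum a (modVec c y) =
      ZMod.stdAddChar (-(y ⬝ᵥ (e : ℤ) • L.dualGram *ᵥ t : ℤ) : ZMod c) *
        L.quadGaussSum a (modVec c y) := by
    conv_lhs => rw [quadGaussSum,
      ← Equiv.sum_comp (Equiv.addRight (modVec c ((e : ℤ) • L.dualGram *ᵥ t)))]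
    rw [quadGaussSum, Finset.mul_sum]
    refine Finset.sum_congr rfl fun s _ => ?_
    rw [← AddChar.map_add_eq_mul, Equiv.coe_addRight, qMod_add_modVec, hgram, hq, dotProduct_zero,
      dotProduct_add, modVec_dotProduct_modVec]
    ring_nf
  have hone := mul_right_cancel₀ hG ((one_mul _).trans hshift)
  rw [← AddChar.map_zero_eq_one (ZMod.stdAddChar (N := c)), ZMod.injective_stdAddChar.eq_iff,
    eq_comm, neg_eq_zero, ZMod.intCast_zmod_eq_zero_iff_dvd, dotProduct_smul, smul_eq_mul, hce]
    at hone
  exact Int.dvd_of_mul_dvd_mul_left he0 hone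

lemma cuspSum_of_dvd (hDc : D ∣ c) {a : ZMod c} {d : ℤ} (had : a * d = 1) (τ : ℂ) :
    L.cuspSum P a (-I * (τ + d / c)) = L.quadGaussSum a 0 * L.theta P τ := by
  rw [cuspSum, ← L.gram_mulVec_injective.tsum_eq, theta, ← tsum_mul_left]
  · refine tsum_congr fun x => ?_
    have hexp : cexp (-π * (-I * (τ + d / c)) * (2 * L.q x : ℝ)) =
        ZMod.stdAddChar (d * L.q x : ZMod c) * cexp (2 * π * I * L.q x * τ) := by
      rw [← Int.cast_mul, ZMod.stdAddChar_coe, ← Complex.exp_add]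
      congr 1
      push_cast
      ring
    have hcancel : ZMod.stdAddChar (-(d * L.q x : ZMod c)) * ZMod.stdAddChar (d * L.q x : ZMod c) =
        (1 : ℂ) := by
      rw [← AddChar.map_add_eq_mul, neg_add_cancel, AddChar.map_zero_eq_one]
    rw [L.quadGaussSum_gram_mulVec had, ← realGram_mulVec_realVec,
      quadForm_inv_mulVec L.posDef_realGram, quadForm_realVec, hexp]
    linear_combination P (L.realGram *ᵥ realVec x) * L.quadGaussSum a 0 *
      cexp (2 * π * I * L.q x * τ) * hcancel
  · intro y hy
    by_contra h
    exact hy (by simp only [L.quadGaussSum_eq_zero hDc a h, mul_zero, zero_mul])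

lemma theta_moebius_of_dvd (hP : IsPoissonWeight L.realGram k j P) (hDc : D ∣ c) {a b d : ℤ}
    (hdet : a * d - b * c = 1) {τ : ℂ} (hτ : 0 < τ.im) :
    L.theta P ((a * τ + b) / (c * τ + d)) = (c * τ + d) ^ (k + 2 * j) *
      ((1 / (I * c)) ^ k * (√L.realGram.det : ℂ)⁻¹ * L.quadGaussSum (a : ZMod c) 0) *
        L.theta P τ := by
  have had : (a : ZMod c) * d = 1 := by
    have h := congrArg (Int.cast : ℤ → ZMod c) hdet
    push_cast at h
    simpa using h
  rw [L.theta_moebius_eq_cuspSum hP hdet hτ, L.cuspSum_of_dvd hDc had]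
  ring

lemma tendsto_sub_mul_I_comap_re (r : ℝ) :
    Tendsto (fun σ : ℂ => σ - r * I) (comap re atTop) (comap re atTop) :=
  tendsto_comap_iff.mpr (tendsto_comap.congr fun σ => by simp)

/-- The expansion of the theta series at the cusp `b / d` is computed directly and through the
transformation under `[[a, b], [c, d]]`. -/
lemma cuspSum_one_eq_of_dvd {d : ℕ} [NeZero d] (hDc : D ∣ c) {a b : ℤ}
    (hdet : a * d - b * c = 1) {σ : ℂ} (hσ : 0 < σ.re) :
    L.cuspSum (fun _ => 1) (b : ZMod d) σ =
      d ^ k * ((1 / (I * c)) ^ k * (√L.realGram.det : ℂ)⁻¹ * L.quadGaussSum (a : ZMod c) 0) *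
        L.cuspSum (fun _ => 1) (0 : ZMod 1) (σ - (c / d : ℝ) * I) := by
  have hP := isPoissonWeight_one L.posDef_realGram L.card_eq
  have hK : (√L.realGram.det : ℂ) ≠ 0 := by
    exact_mod_cast (Real.sqrt_pos.mpr L.posDef_realGram.det_pos).ne'
  have hd : (d : ℂ) ≠ 0 := by exact_mod_cast NeZero.ne d
  set κ := (1 / (I * c)) ^ k * (√L.realGram.det : ℂ)⁻¹ * L.quadGaussSum (a : ZMod c) 0 with hκ
  set σ' : ℂ := σ - (c / d : ℝ) * I with hσ'
  have hre : 0 < σ'.re := by simpa [hσ'] using hσ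
  have hσ0 : σ ≠ 0 := by rintro rfl; simp at hσ
  have hσ'0 : σ' ≠ 0 := by rintro h; simp [h] at hre
  have hlower : (c * (I * σ'⁻¹) + (d : ℤ) : ℂ) = d * σ / σ' := by
    field_simp
    rw [hσ']
    push_cast
    field_simp
    ring
  have hmoebius : (a * (I * σ'⁻¹) + b) / (c * (I * σ'⁻¹) + (d : ℤ)) =
      b / d + I * σ⁻¹ / d ^ 2 := by
    have h : (a * d - b * c : ℂ) = 1 := by exact_mod_cast hdet
    rw [hlower]
    field_simp
    rw [hσ']
    push_cast
    field_simp
    linear_combination I * h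
  have h₁ := L.theta_ratCast_add_eq_cuspSum hP b (c := d) hσ
  have h₂ := L.theta_ratCast_add_eq_cuspSum hP 0 (c := 1) hre
  have h₃ := L.theta_moebius_of_dvd hP hDc hdet (τ := I * σ'⁻¹) (by simpa using re_inv_pos hre)
  simp only [mul_zero, add_zero, pow_zero, mul_one, one_mul, Int.cast_zero, zero_add,
    Nat.cast_one, one_pow, div_one] at h₁ h₂ h₃
  rw [hmoebius, h₁, hlower, h₂, ← hκ, div_pow, mul_pow] at h₃
  field_simp at h₃
  linear_combination h₃

/-- Compare the leading terms in `cuspSum_one_eq_of_dvd`. -/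
lemma quadGaussSum_reciprocity {d : ℕ} [NeZero d] (hDc : D ∣ c) {a b : ℤ}
    (hdet : a * d - b * c = 1) :
    (1 / (I * c)) ^ k * (√L.realGram.det : ℂ)⁻¹ * L.quadGaussSum (a : ZMod c) 0 =
      (1 / (d : ℂ)) ^ k * L.quadGaussSum (b : ZMod d) 0 := by
  have hgrowth : HasExpGrowth fun _ : ι → ℝ => (1 : ℂ) := .const 1
  have hd : (d : ℂ) ≠ 0 := by exact_mod_cast NeZero.ne d
  have hev : ∀ᶠ σ : ℂ in comap re atTop, 0 < σ.re :=
    tendsto_comap.eventually (eventually_gt_atTop 0)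
  have hleft := (L.tendsto_cuspSum hgrowth (b : ZMod d)).congr'
    (hev.mono fun σ hσ => L.cuspSum_one_eq_of_dvd hDc hdet hσ)
  have hright := ((L.tendsto_cuspSum hgrowth (0 : ZMod 1)).comp
    (tendsto_sub_mul_I_comap_re (c / d))).const_mul
      (d ^ k * ((1 / (I * c)) ^ k * (√L.realGram.det : ℂ)⁻¹ * L.quadGaussSum (a : ZMod c) 0))
  have : (comap re atTop).NeBot := atTop_neBot.comap_of_surj re_surjective
  have hlim := tendsto_nhds_unique hleft hright
  rw [quadGaussSum_one, one_mul, one_mul, mul_one] at hlim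
  rw [hlim, ← mul_assoc, ← mul_pow, one_div_mul_cancel hd, one_pow, one_mul]

end EvenLattice

end CuspExpansions

/-! ### Gauss sums of quadratic forms over finite fields -/

section FiniteFieldGaussSum

open Matrix

lemma exists_transpose_mul_mul_eq_diagonal {F ι : Type*} [Field F] [NeZero (2 : F)] [Fintype ι]
    [DecidableEq ι] {M : Matrix ι ι F} (hM : M.IsSymm) :
    ∃ (U : Matrix ι ι F) (w : ι → F), IsUnit U ∧ Uᵀ * M * U = diagonal w := by
  have : Invertible (2 : F) := invertibleOfNonzero two_ne_zero
  have hsymm : LinearMap.IsSymm (toBilin' M) := by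
    refine ⟨fun x y => ?_⟩
    rw [RingHom.id_apply, toBilin'_apply', toBilin'_apply', dotProduct_mulVec,
      ← mulVec_transpose, hM.eq, dotProduct_comm]
  obtain ⟨v, hv⟩ := LinearMap.BilinForm.exists_orthogonal_basis hsymm
  let e : Fin (Module.finrank F (ι → F)) ≃ ι := Fintype.equivOfCardEq (by simp)
  let B := Pi.basisFun F ι
  refine ⟨B.toMatrix (v.reindex e), fun i => toBilin' M (v.reindex e i) (v.reindex e i), ?_, ?_⟩
  · exact IsUnit.of_mul_eq_one _ (B.toMatrix_mul_toMatrix_flip (v.reindex e))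
  · have h := LinearMap.BilinForm.toMatrix_mul_basis_toMatrix B (v.reindex e) (toBilin' M)
    rw [LinearMap.BilinForm.toMatrix_basisFun, LinearMap.BilinForm.toMatrix'_toBilin'] at h
    rw [h]
    ext i j
    rw [LinearMap.BilinForm.toMatrix_apply, diagonal_apply]
    split_ifs with hij
    · rw [hij]
    · rw [v.reindex_apply, v.reindex_apply]
      exact hv (e.symm.injective.ne hij)

lemma addChar_sum_eq_prod {ι A M : Type*} [AddCommMonoid A] [CommMonoid M] (ψ : AddChar A M)
    (s : Finset ι) (g : ι → A) : ψ (∑ i ∈ s, g i) = ∏ i ∈ s, ψ (g i) :=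
  map_prod ψ.toMonoidHom (fun i => Multiplicative.ofAdd (g i)) s

variable {F : Type*} [Field F] [Fintype F] [DecidableEq F]

/-- The quadratic character of a finite field with values in `ℂ`. -/
def complexQuadraticChar (F : Type*) [Field F] [Fintype F] [DecidableEq F] : MulChar F ℂ :=
  (quadraticChar F).ringHomComp (Int.castRingHom ℂ)

lemma complexQuadraticChar_apply (t : F) : complexQuadraticChar F t = (quadraticChar F t : ℂ) :=
  rfl

lemma complexQuadraticChar_mul_self {t : F} (ht : t ≠ 0) :
    complexQuadraticChar F t * complexQuadraticChar F t = 1 := by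
  rw [complexQuadraticChar_apply, ← Int.cast_mul, ← pow_two, quadraticChar_sq_one ht, Int.cast_one]

lemma sum_comp_sq_eq_sum_quadraticChar (hF : ringChar F ≠ 2) (g : F → ℂ) :
    ∑ x, g (x ^ 2) = ∑ y, (complexQuadraticChar F y + 1) * g y := by
  rw [← Finset.sum_fiberwise (s := Finset.univ) (g := fun x : F => x ^ 2)]
  refine Finset.sum_congr rfl fun y _ => ?_
  have hcard : (({x | x ^ 2 = y} : Finset F).card : ℂ) = complexQuadraticChar F y + 1 := by
    have h := quadraticChar_card_sqrts hF y
    rw [complexQuadraticChar_apply]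
    norm_cast
    rw [← h]
    congr 2
    ext
    simp
  rw [Finset.sum_congr rfl fun x hx => congrArg g (Finset.mem_filter.mp hx).2, Finset.sum_const,
    nsmul_eq_mul, hcard]

lemma sum_addChar_mul_sq (hF : ringChar F ≠ 2) {ψ : AddChar F ℂ} (hψ : ψ.IsPrimitive) {t : F}
    (ht : t ≠ 0) :
    ∑ x, ψ (t * x ^ 2) = complexQuadraticChar F t * gaussSum (complexQuadraticChar F) ψ := by
  have hshift := gaussSum_mulShift (complexQuadraticChar F) ψ (Units.mk0 t ht)
  have hzero : ∑ y, ψ (t * y) = 0 := by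
    simpa [mul_comm, ht] using AddChar.sum_mulShift t hψ
  rw [sum_comp_sq_eq_sum_quadraticChar hF fun y => ψ (t * y)]
  simp only [add_mul, one_mul]
  rw [Finset.sum_add_distrib, hzero, add_zero, ← hshift, ← mul_assoc, Units.val_mk0,
    complexQuadraticChar_mul_self ht, one_mul]
  rfl

lemma gaussSum_complexQuadraticChar_sq (hF : ringChar F ≠ 2) {ψ : AddChar F ℂ}
    (hψ : ψ.IsPrimitive) :
    gaussSum (complexQuadraticChar F) ψ ^ 2 = complexQuadraticChar F (-1) * Fintype.card F :=
  gaussSum_sq ((MulChar.ringHomComp_ne_one_iff (RingHom.injective_int _)).mpr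
    (quadraticChar_ne_one hF)) ((quadraticChar_isQuadratic F).comp _) hψ

variable {ι : Type*} [Fintype ι] [DecidableEq ι]

lemma sum_addChar_sum_mul_sq (hF : ringChar F ≠ 2) {ψ : AddChar F ℂ} (hψ : ψ.IsPrimitive)
    {w : ι → F} (hw : ∀ i, w i ≠ 0) :
    ∑ s : ι → F, ψ (∑ i, w i * s i ^ 2) =
      complexQuadraticChar F (∏ i, w i) *
        gaussSum (complexQuadraticChar F) ψ ^ Fintype.card ι := by
  simp only [addChar_sum_eq_prod]
  rw [← Fintype.piFinset_univ, ← Finset.prod_univ_sum (fun _ => Finset.univ)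
    (fun i x => ψ (w i * x ^ 2)), Finset.prod_congr rfl fun i _ => sum_addChar_mul_sq hF hψ (hw i),
    Finset.prod_mul_distrib, ← map_prod, Finset.prod_const, Finset.card_univ]

lemma sum_addChar_dotProduct_mulVec (hF : ringChar F ≠ 2) {ψ : AddChar F ℂ} (hψ : ψ.IsPrimitive)
    {M : Matrix ι ι F} (hM : M.IsSymm) (hdet : M.det ≠ 0) :
    ∑ s : ι → F, ψ (s ⬝ᵥ M *ᵥ s) =
      complexQuadraticChar F M.det * gaussSum (complexQuadraticChar F) ψ ^ Fintype.card ι := by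
  have : NeZero (2 : F) := ⟨Ring.two_ne_zero hF⟩
  obtain ⟨U, w, hU, hdiag⟩ := exists_transpose_mul_mul_eq_diagonal hM
  have hUdet : U.det ≠ 0 := ((isUnit_iff_isUnit_det U).mp hU).ne_zero
  have hprod : ∏ i, w i = U.det * U.det * M.det := by
    rw [← det_diagonal, ← hdiag, det_mul, det_mul, det_transpose]
    ring
  have hw : ∀ i, w i ≠ 0 := fun i =>
    Finset.prod_ne_zero_iff.mp (hprod ▸ mul_ne_zero (mul_ne_zero hUdet hUdet) hdet) i
      (Finset.mem_univ i)
  have hform (s : ι → F) : U *ᵥ s ⬝ᵥ M *ᵥ (U *ᵥ s) = ∑ i, w i * s i ^ 2 := by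
    rw [dotProduct_comm, dotProduct_mulVec, dotProduct_comm, ← mulVec_transpose, mulVec_mulVec,
      mulVec_mulVec, hdiag]
    simp only [dotProduct, mulVec_diagonal]
    exact Finset.sum_congr rfl fun i _ => by ring
  have hbij : Function.Bijective U.mulVec :=
    ⟨mulVec_injective_of_isUnit hU, mulVec_surjective_iff_isUnit.mpr hU⟩
  rw [← hbij.sum_comp]
  simp only [hform]
  rw [sum_addChar_sum_mul_sq hF hψ hw, hprod, map_mul, map_mul,
    complexQuadraticChar_mul_self hUdet, one_mul]

end FiniteFieldGaussSum

section EvenLatticeGaussSum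

open Matrix

namespace EvenLattice

variable {ι : Type*} [Fintype ι] [DecidableEq ι] {k D : ℕ} (L : EvenLattice ι k D)

lemma quadGaussSum_zero_eq_sum {p : ℕ} [Fact p.Prime] (hp : p ≠ 2) (b : ZMod p) :
    L.quadGaussSum b 0 = ∑ s : ι → ZMod p,
      ZMod.stdAddChar (s ⬝ᵥ ((b / 2) • L.gram.map (Int.cast : ℤ → ZMod p)) *ᵥ s) := by
  have : NeZero (2 : ZMod p) := ⟨Ring.two_ne_zero (by rwa [ZMod.ringChar_zmod_n])⟩
  refine Finset.sum_congr rfl fun s _ => congrArg _ ?_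
  have hform : s ⬝ᵥ L.gram.map (Int.cast : ℤ → ZMod p) *ᵥ s = 2 * L.qMod s := by
    have h := congrArg (Int.cast : ℤ → ZMod p) (L.two_mul_q (liftVec s))
    simpa [qMod, dotProduct, mulVec, liftVec] using h.symm
  rw [smul_mulVec, dotProduct_smul, hform, zero_dotProduct, sub_zero, smul_eq_mul,
    ← mul_assoc, div_mul_cancel₀ _ two_ne_zero]

lemma quadGaussSum_prime {p : ℕ} [Fact p.Prime] (hp : p ≠ 2) (hpD : ¬ p ∣ D) {b : ZMod p}
    (hb : b ≠ 0) : L.quadGaussSum b 0 = (p * legendreSym p (-D) : ℂ) ^ k := by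
  have hF : ringChar (ZMod p) ≠ 2 := by rwa [ZMod.ringChar_zmod_n]
  have hD : (D : ZMod p) ≠ 0 := by rwa [Ne, ZMod.natCast_eq_zero_iff]
  have hb2 : b / 2 ≠ 0 := div_ne_zero hb (Ring.two_ne_zero hF)
  have hgram : (L.gram.map (Int.cast : ℤ → ZMod p)).det = D ^ k := by
    have h := (Int.castRingHom (ZMod p)).map_det L.gram
    rw [L.det_gram, map_pow, map_natCast] at h
    exact h.symm
  have hdet : ((b / 2) • L.gram.map (Int.cast : ℤ → ZMod p)).det =
      (b / 2 * (b / 2) * D) ^ k := by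
    rw [det_smul, hgram, L.card_eq, pow_mul, pow_two, ← mul_pow]
  rw [L.quadGaussSum_zero_eq_sum hp,
    sum_addChar_dotProduct_mulVec hF (ZMod.isPrimitive_stdAddChar p)
      ((L.isSymm_gram.map _).smul _) (hdet ▸ pow_ne_zero k (mul_ne_zero (mul_ne_zero hb2 hb2) hD)),
    hdet, L.card_eq, pow_mul,
    gaussSum_complexQuadraticChar_sq hF (ZMod.isPrimitive_stdAddChar p), map_pow, ← mul_pow,
    map_mul, map_mul, complexQuadraticChar_mul_self hb2, one_mul, ZMod.card, ← mul_assoc,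
    ← map_mul, mul_neg_one, mul_comm, complexQuadraticChar_apply, legendreSym]
  push_cast
  rfl

end EvenLattice

end EvenLatticeGaussSum

/-! ### Modularity of the theta series -/

section JacobiCharacter

variable {D : ℕ}

lemma jacobiSym_neg_natCast_of_mod_four_eq_three (hD : D % 4 = 3) {m : ℕ} (hm : Odd m) :
    jacobiSym (-(D : ℤ)) m = jacobiSym m D := by
  have hDo : Odd D := Nat.odd_iff.mpr (Nat.odd_of_mod_four_eq_three hD)
  rw [jacobiSym.neg _ hm]
  rcases Nat.odd_mod_four_iff.mp (Nat.odd_iff.mp hm) with h | h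
  · rw [ZMod.χ₄_nat_one_mod_four h, one_mul, jacobiSym.quadratic_reciprocity_one_mod_four' hDo h]
  · rw [ZMod.χ₄_nat_three_mod_four h, jacobiSym.quadratic_reciprocity_three_mod_four hD h]
    ring

lemma jacobiSym_neg_of_mod_four_eq_three (hD : D % 4 = 3) (a : ℤ) :
    jacobiSym (-a) D = -jacobiSym a D := by
  rw [jacobiSym.neg _ (Nat.odd_iff.mpr (Nat.odd_of_mod_four_eq_three hD)),
    ZMod.χ₄_nat_three_mod_four hD, neg_one_mul]

lemma chiK_eq_jacobiSym (hD : D % 4 = 3) (a : ℤ) : chiK D a = jacobiSym a D := by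
  have hD0 : (D : ℤ) ≠ 0 := by omega
  have hnonneg := Int.emod_nonneg a hD0
  have hodd : Odd (oddRep D a) := by
    rw [Nat.odd_iff, oddRep]
    split_ifs <;> omega
  rw [chiK, jacobiSym_neg_natCast_of_mod_four_eq_three hD hodd]
  apply jacobiSym.mod_left'
  rw [oddRep]
  split_ifs
  · rw [Int.toNat_of_nonneg hnonneg, Int.emod_emod]
  · push_cast
    rw [Int.toNat_of_nonneg hnonneg, Int.add_emod_right, Int.emod_emod]

end JacobiCharacter

section SlashOnPlane

open Complex UpperHalfPlane ModularForm
open scoped MatrixGroups Manifold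

lemma SL2_det_eq_one (γ : SL(2, ℤ)) : γ 0 0 * γ 1 1 - γ 0 1 * γ 1 0 = 1 := by
  rw [← Matrix.det_fin_two, γ.det_coe]

lemma slash_comp_coe_apply (w : ℤ) (f : ℂ → ℂ) (γ : SL(2, ℤ)) (τ : ℍ) :
    ((f ∘ UpperHalfPlane.coe) ∣[w] γ) τ =
      f ((γ 0 0 * τ + γ 0 1) / (γ 1 0 * τ + γ 1 1)) * (γ 1 0 * τ + γ 1 1 : ℂ) ^ (-w) := by
  rw [SL_slash_apply, Function.comp_apply, coe_specialLinearGroup_apply,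
    ModularGroup.denom_apply]
  simp only [algebraMap_int_eq, eq_intCast, ofReal_intCast]

lemma slash_matR (w : ℤ) (f : ℂ → ℂ) (γ : SL(2, ℤ)) (τ : ℍ) :
    slash w (matR γ) f τ = ((f ∘ UpperHalfPlane.coe) ∣[w] γ) τ := by
  have hdet : (matR γ).det = 1 := (RingHom.map_det (Int.castRingHom ℝ) γ.1).symm.trans (by simp)
  rw [slash_comp_coe_apply, slash, hdet, Real.sqrt_one, ofReal_one, one_zpow, one_mul, mul_comm]
  simp only [matR, Matrix.map_apply, ofReal_intCast]

lemma slash_neg_eq_zpow_smul (w : ℤ) (f : ℍ → ℂ) (γ : SL(2, ℤ)) :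
    f ∣[w] (-γ) = (-1 : ℂ) ^ w • f ∣[w] γ := by
  ext τ
  rw [Pi.smul_apply, SL_slash_apply, SL_slash_apply, ModularGroup.SL_neg_smul,
    ModularGroup.denom_apply, ModularGroup.denom_apply, Matrix.SpecialLinearGroup.coe_neg,
    Matrix.neg_apply, Matrix.neg_apply, Int.cast_neg, Int.cast_neg, neg_mul, ← neg_add,
    ← neg_one_mul (_ + _), mul_zpow, zpow_neg (-1), ← inv_zpow, inv_neg_one, smul_eq_mul]
  ring

lemma mdifferentiable_comp_coe {f : ℂ → ℂ} (hf : DifferentiableOn ℂ f UHP) :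
    MDiff (f ∘ UpperHalfPlane.coe) :=
  mdifferentiable_iff.mpr <| hf.congr fun z hz => by
    rw [Function.comp_apply, Function.comp_apply, ofComplex_apply_of_im_pos hz]

end SlashOnPlane

section ThetaModularity

open Complex Real Matrix Filter Topology ModularForm
open UpperHalfPlane hiding I I_re I_im re im
open scoped MatrixGroups

namespace EvenLattice

variable {ι : Type*} [Fintype ι] [DecidableEq ι] {k D : ℕ} (L : EvenLattice ι k D)
  {P : (ι → ℝ) → ℂ} {j : ℕ} {γ : SL(2, ℤ)}

lemma q_nonneg (x : ι → ℤ) : 0 ≤ L.q x := by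
  have h : 0 ≤ quadForm L.realGram (realVec x) := by
    simpa [quadForm] using L.posDef_realGram.posSemidef.dotProduct_mulVec_nonneg (realVec x)
  rw [quadForm_realVec] at h
  exact_mod_cast (mul_nonneg_iff_of_pos_left two_pos).mp h

lemma differentiableOn_theta (hP : HasExpGrowth P) : DifferentiableOn ℂ (L.theta P) UHP := by
  intro τ₀ (hτ₀ : 0 < τ₀.im)
  obtain ⟨y, hy, hyτ₀⟩ := exists_between hτ₀
  have hopen : IsOpen {τ : ℂ | y < τ.im} := isOpen_lt continuous_const continuous_im
  refine (((differentiableOn_tsum_of_summable_norm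
    (L.summable_theta hP (τ := y * I) (by simpa using hy)).norm (fun x => by fun_prop) hopen
      fun x τ (hτ : y < τ.im) => ?_).differentiableAt
        (hopen.mem_nhds hyτ₀)).differentiableWithinAt)
  have hq : (0 : ℝ) ≤ L.q x := by exact_mod_cast L.q_nonneg x
  rw [norm_mul, norm_mul, Complex.norm_exp, Complex.norm_exp]
  gcongr ‖_‖ * Real.exp ?_
  simp only [mul_re, mul_im, re_ofNat, im_ofNat, ofReal_re, ofReal_im, I_re, I_im, intCast_re,
    intCast_im, zero_mul, mul_zero, sub_zero, zero_add, add_zero, mul_one, zero_sub]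
  gcongr

lemma theta_add_intCast (m : ℤ) (τ : ℂ) : L.theta P (τ + m) = L.theta P τ := by
  refine tsum_congr fun x => ?_
  have h : 2 * π * I * L.q x * (τ + m) =
      2 * π * I * L.q x * τ + ((L.q x * m : ℤ) : ℂ) * (2 * π * I) := by
    push_cast
    ring
  rw [h, Complex.exp_add, Complex.exp_int_mul_two_pi_mul_I, mul_one]

lemma theta_slash_eq_cuspSum (hP : IsPoissonWeight L.realGram k j P) {c : ℕ} [NeZero c]
    (hc : γ 1 0 = c) (τ : ℍ) :
    ((L.theta P ∘ UpperHalfPlane.coe) ∣[(k + 2 * j : ℤ)] γ) τ =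
      (1 / (I * c)) ^ k * (√L.realGram.det : ℂ)⁻¹ *
        L.cuspSum P (γ 0 0 : ZMod c) (-I * (τ + γ 1 1 / c)) := by
  have hdet : γ 0 0 * γ 1 1 - γ 0 1 * c = 1 := hc ▸ SL2_det_eq_one γ
  have hdenom : (c * τ + γ 1 1 : ℂ) ≠ 0 := by
    simpa [ModularGroup.denom_apply, hc] using denom_ne_zero γ τ
  rw [slash_comp_coe_apply, hc, Int.cast_natCast, L.theta_moebius_eq_cuspSum hP hdet τ.im_pos,
    mul_right_comm, ← zpow_natCast, ← zpow_add₀ hdenom]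
  push_cast
  rw [add_neg_cancel, zpow_zero, one_mul]

lemma theta_slash_of_dvd (hP : IsPoissonWeight L.realGram k j P) {c : ℕ} [NeZero c]
    (hc : γ 1 0 = c) (hDc : D ∣ c) :
    (L.theta P ∘ UpperHalfPlane.coe) ∣[(k + 2 * j : ℤ)] γ =
      ((1 / (I * c)) ^ k * (√L.realGram.det : ℂ)⁻¹ * L.quadGaussSum (γ 0 0 : ZMod c) 0) •
        (L.theta P ∘ UpperHalfPlane.coe) := by
  have hdet : γ 0 0 * γ 1 1 - γ 0 1 * c = 1 := hc ▸ SL2_det_eq_one γ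
  have had : (γ 0 0 : ZMod c) * (γ 1 1 : ℤ) = 1 := by
    have h := congrArg (Int.cast : ℤ → ZMod c) hdet
    push_cast at h
    simpa using h
  ext τ
  rw [L.theta_slash_eq_cuspSum hP hc, L.cuspSum_of_dvd hDc had, ← mul_assoc, Pi.smul_apply,
    Function.comp_apply, smul_eq_mul]

/-- By Dirichlet's theorem `d` may be replaced by a prime `p ≡ d mod c`; reciprocity turns the
multiplier into a Gauss sum modulo `p`. -/
lemma normalized_quadGaussSum_eq_jacobiSym (hD : D % 4 = 3) {c : ℕ} [NeZero c] (hDc : D ∣ c)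
    {a b d : ℤ} (hdet : a * d - b * c = 1) :
    (1 / (I * c)) ^ k * (√L.realGram.det : ℂ)⁻¹ * L.quadGaussSum (a : ZMod c) 0 =
      (jacobiSym d D : ℂ) ^ k := by
  have hcop : IsCoprime d (c : ℤ) := ⟨a, -b, by linarith⟩
  obtain ⟨p, hpgt, hp, hpd⟩ := Nat.forall_exists_prime_gt_and_zmodEq (2 + D) (NeZero.ne c) hcop
  obtain ⟨t, ht⟩ := hpd.symm.dvd
  have : Fact p.Prime := ⟨hp⟩
  have hp2 : p ≠ 2 := by omega
  have hpD : ¬ p ∣ D := fun h => by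
    have := Nat.le_of_dvd (by omega) h
    omega
  have hp0 : (p : ℂ) ≠ 0 := by exact_mod_cast hp.ne_zero
  have hdet' : a * p - (b + a * t) * c = 1 := by linear_combination hdet + a * ht
  have hb : ((b + a * t : ℤ) : ZMod p) ≠ 0 := fun h => by
    have h1 := congrArg (Int.cast : ℤ → ZMod p) hdet'
    rw [Int.cast_sub, Int.cast_mul (b + a * t), h] at h1
    simp at h1
  have hpd' : (p : ℤ) % D = d % D :=
    hpd.of_dvd (Int.natCast_dvd_natCast.mpr hDc)
  rw [L.quadGaussSum_reciprocity hDc hdet', L.quadGaussSum_prime hp2 hpD hb, ← mul_pow,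
    one_div, inv_mul_cancel_left₀ hp0, jacobiSym.legendreSym.to_jacobiSym,
    jacobiSym_neg_natCast_of_mod_four_eq_three hD (hp.odd_of_ne_two hp2), jacobiSym.mod_left' hpd']

lemma theta_slash_eq_of_pos (hD : D % 4 = 3) (hP : IsPoissonWeight L.realGram k j P)
    (hγ : (D : ℤ) ∣ γ 1 0) (hpos : 0 < γ 1 0) :
    (L.theta P ∘ UpperHalfPlane.coe) ∣[(k + 2 * j : ℤ)] γ =
      (jacobiSym (γ 1 1) D : ℂ) ^ k • (L.theta P ∘ UpperHalfPlane.coe) := by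
  lift γ 1 0 to ℕ using hpos.le with c hc
  have : NeZero c := ⟨by omega⟩
  have hDc : D ∣ c := Int.natCast_dvd_natCast.mp hγ
  rw [L.theta_slash_of_dvd hP hc.symm hDc, L.normalized_quadGaussSum_eq_jacobiSym hD hDc
    (hc ▸ SL2_det_eq_one γ)]

lemma theta_slash_eq_of_unipotent (w : ℤ) (h10 : γ 1 0 = 0) (h11 : γ 1 1 = 1) :
    (L.theta P ∘ UpperHalfPlane.coe) ∣[w] γ = L.theta P ∘ UpperHalfPlane.coe := by
  have h00 : γ 0 0 = 1 := by simpa [h10, h11] using SL2_det_eq_one γ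
  ext τ
  rw [slash_comp_coe_apply, h10, h11, h00]
  simpa using L.theta_add_intCast (γ 0 1) τ

lemma theta_slash_eq_of_slash_neg (hD : D % 4 = 3)
    (h : (L.theta P ∘ UpperHalfPlane.coe) ∣[(k + 2 * j : ℤ)] (-γ) =
      (jacobiSym ((-γ) 1 1) D : ℂ) ^ k • (L.theta P ∘ UpperHalfPlane.coe)) :
    (L.theta P ∘ UpperHalfPlane.coe) ∣[(k + 2 * j : ℤ)] γ =
      (jacobiSym (γ 1 1) D : ℂ) ^ k • (L.theta P ∘ UpperHalfPlane.coe) := by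
  rw [← neg_neg γ, slash_neg_eq_zpow_smul, h, smul_smul, neg_neg]
  congr 1
  rw [SpecialLinearGroup.coe_neg, Matrix.neg_apply, jacobiSym_neg_of_mod_four_eq_three hD,
    (by push_cast; rfl : (k + 2 * j : ℤ) = (k + 2 * j : ℕ)), zpow_natCast, pow_add, pow_mul,
    neg_one_sq, one_pow, mul_one, ← mul_pow]
  push_cast
  ring

theorem theta_slash_eq (hD : D % 4 = 3) (hP : IsPoissonWeight L.realGram k j P)
    (hγ : (D : ℤ) ∣ γ 1 0) :
    (L.theta P ∘ UpperHalfPlane.coe) ∣[(k + 2 * j : ℤ)] γ =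
      (jacobiSym (γ 1 1) D : ℂ) ^ k • (L.theta P ∘ UpperHalfPlane.coe) := by
  rcases lt_trichotomy (γ 1 0) 0 with hneg | hzero | hpos
  · refine L.theta_slash_eq_of_slash_neg hD (L.theta_slash_eq_of_pos hD hP ?_ ?_)
    · rwa [SpecialLinearGroup.coe_neg, Matrix.neg_apply, dvd_neg]
    · rwa [SpecialLinearGroup.coe_neg, Matrix.neg_apply, neg_pos]
  · have hunit : γ 0 0 * γ 1 1 = 1 := by simpa [hzero] using SL2_det_eq_one γ
    rcases Int.eq_one_or_neg_one_of_mul_eq_one' hunit with ⟨-, h11⟩ | ⟨-, h11⟩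
    · rw [L.theta_slash_eq_of_unipotent _ hzero h11, h11, jacobiSym.one_left, Int.cast_one,
        one_pow, one_smul]
    · have hneg11 : (-γ) 1 1 = 1 := by simp [h11]
      refine L.theta_slash_eq_of_slash_neg hD ?_
      rw [L.theta_slash_eq_of_unipotent _ (by simp [hzero]) hneg11, hneg11, jacobiSym.one_left,
        Int.cast_one, one_pow, one_smul]
  · exact L.theta_slash_eq_of_pos hD hP hγ hpos

lemma isZeroAtImInfty_theta_slash_of_pos (hP : IsPoissonWeight L.realGram k j P) (hP0 : P 0 = 0)
    (hpos : 0 < γ 1 0) :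
    IsZeroAtImInfty ((L.theta P ∘ UpperHalfPlane.coe) ∣[(k + 2 * j : ℤ)] γ) := by
  lift γ 1 0 to ℕ using hpos.le with c hc
  have : NeZero c := ⟨by omega⟩
  have hre : Tendsto (fun τ : ℍ => -I * (τ + γ 1 1 / c)) atImInfty (comap re atTop) :=
    tendsto_comap_iff.mpr (tendsto_comap.congr fun τ => by simp [← UpperHalfPlane.coe_im])
  have h := ((L.tendsto_cuspSum hP.hasExpGrowth (γ 0 0 : ZMod c)).comp hre).const_mul
    ((1 / (I * c)) ^ k * (√L.realGram.det : ℂ)⁻¹)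
  rw [hP0, zero_mul, mul_zero] at h
  exact h.congr fun τ => (L.theta_slash_eq_cuspSum hP hc.symm τ).symm

theorem isZeroAtImInfty_theta_slash (hP : IsPoissonWeight L.realGram k j P) (hP0 : P 0 = 0)
    (hγ : γ 1 0 ≠ 0) :
    IsZeroAtImInfty ((L.theta P ∘ UpperHalfPlane.coe) ∣[(k + 2 * j : ℤ)] γ) := by
  rcases lt_or_gt_of_ne hγ with hneg | hpos
  · rw [← neg_neg γ, slash_neg_eq_zpow_smul]
    exact (L.isZeroAtImInfty_theta_slash_of_pos hP hP0 (by simpa using hneg)).smul _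
  · exact L.isZeroAtImInfty_theta_slash_of_pos hP hP0 hpos

end EvenLattice

end ThetaModularity

/-! ### The residue theorem for modular forms of weight two -/

section Primitive

open Complex Set

lemma isOpen_UHP : IsOpen UHP := isOpen_lt continuous_const continuous_im

lemma convex_UHP : Convex ℝ UHP := convex_halfSpace_im_gt 0

lemma eqOn_UHP_of_hasDerivAt_eq {Φ Ψ F : ℂ → ℂ} (hΦ : ∀ z ∈ UHP, HasDerivAt Φ (F z) z)
    (hΨ : ∀ z ∈ UHP, HasDerivAt Ψ (F z) z) {z₀ : ℂ} (hz₀ : z₀ ∈ UHP) (h : Φ z₀ = Ψ z₀) :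
    EqOn Φ Ψ UHP :=
  isOpen_UHP.eqOn_of_deriv_eq convex_UHP.isPreconnected
    (fun z hz => (hΦ z hz).differentiableAt.differentiableWithinAt)
    (fun z hz => (hΨ z hz).differentiableAt.differentiableWithinAt)
    (fun z hz => (hΦ z hz).deriv.trans (hΨ z hz).deriv.symm) hz₀ h

lemma neg_inv_mem_UHP {z : ℂ} (hz : z ∈ UHP) : -z⁻¹ ∈ UHP :=
  UpperHalfPlane.im_inv_neg_coe_pos ⟨z, hz⟩ |>.trans_eq (by rw [inv_neg])

lemma add_one_mem_UHP {z : ℂ} (hz : z ∈ UHP) : z + 1 ∈ UHP := by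
  simpa [UHP] using hz

lemma add_mul_I_mem_UHP {y : ℝ} (hy : 0 < y) (x : ℝ) : (x + y * I : ℂ) ∈ UHP := by
  simpa [UHP] using hy

variable {F Φ : ℂ → ℂ}

/-- The two primitives `Φ (-1 / z)` and `Φ z` of `F` agree at the fixed point `i`. -/
lemma primitive_neg_inv (hS : ∀ z ∈ UHP, F (-z⁻¹) = z ^ 2 * F z)
    (hΦ : ∀ z ∈ UHP, HasDerivAt Φ (F z) z) : EqOn (fun z => Φ (-z⁻¹)) Φ UHP := by
  refine eqOn_UHP_of_hasDerivAt_eq (fun z hz => ?_) hΦ (z₀ := I) (by simp [UHP]) (by simp)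
  have hz0 : z ≠ 0 := by
    rintro rfl
    simp [UHP] at hz
  have hderiv := (hΦ _ (neg_inv_mem_UHP hz)).comp z (hasDerivAt_inv hz0).neg
  rwa [hS z hz, neg_neg, mul_right_comm, mul_inv_cancel₀ (pow_ne_zero 2 hz0), one_mul] at hderiv

/-- The two primitives `Φ (z + 1)` and `Φ z` of `F` agree at `ρ - 1 = -1 / ρ`, where
`ρ = exp (π i / 3)`. -/
lemma primitive_add_one (hT : ∀ z ∈ UHP, F (z + 1) = F z)
    (hS : ∀ z ∈ UHP, F (-z⁻¹) = z ^ 2 * F z) (hΦ : ∀ z ∈ UHP, HasDerivAt Φ (F z) z) :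
    EqOn (fun z => Φ (z + 1)) Φ UHP := by
  set ρ : ℂ := 1 / 2 + (√3 / 2 : ℝ) * I with hρ
  have hρ_mem : ρ ∈ UHP := by simp [UHP, hρ]
  have hρ_mul : ρ * (ρ - 1) = -1 := by
    have h3 : ((√3 : ℝ) : ℂ) ^ 2 = 3 := by
      rw [← ofReal_pow, Real.sq_sqrt (by norm_num)]
      simp
    rw [hρ]
    push_cast
    linear_combination (1 / 4) * I ^ 2 * h3 + (3 / 4) * I_sq
  have hρ_inv : -ρ⁻¹ = ρ - 1 :=
    neg_eq_iff_eq_neg.mpr (inv_eq_of_mul_eq_one_right (by linear_combination -hρ_mul))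
  refine eqOn_UHP_of_hasDerivAt_eq (fun z hz => ?_) hΦ (z₀ := ρ - 1)
    (hρ_inv ▸ neg_inv_mem_UHP hρ_mem) ?_
  · simpa only [hT z hz] using (hΦ _ (add_one_mem_UHP hz)).comp_add_const z 1
  · have h := primitive_neg_inv hS hΦ hρ_mem
    simp only [hρ_inv] at h
    rw [sub_add_cancel, h]

lemma continuous_row (hF : DifferentiableOn ℂ F UHP) {y : ℝ} (hy : 0 < y) :
    Continuous fun x : ℝ => F (x + y * I) :=
  hF.continuousOn.comp_continuous (by fun_prop) (add_mul_I_mem_UHP hy)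

lemma integral_row_eq_zero (hF : DifferentiableOn ℂ F UHP)
    (hT : ∀ z ∈ UHP, F (z + 1) = F z) (hS : ∀ z ∈ UHP, F (-z⁻¹) = z ^ 2 * F z)
    {y : ℝ} (hy : 0 < y) : ∫ x in (0 : ℝ)..1, F (x + y * I) = 0 := by
  obtain ⟨Φ, hΦ'⟩ := convex_UHP.exists_forall_hasDerivWithinAt hF
  have hΦ : ∀ z ∈ UHP, HasDerivAt Φ (F z) z := fun z hz =>
    (hΦ' z hz).hasDerivAt (isOpen_UHP.mem_nhds hz)
  have hper := primitive_add_one hT hS hΦ (add_mul_I_mem_UHP hy 0)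
  rw [intervalIntegral.integral_eq_sub_of_hasDerivAt (f := fun x : ℝ => Φ (x + y * I))
    (fun x _ => ((hΦ _ (add_mul_I_mem_UHP hy x)).comp_add_const (x : ℂ) (y * I)).comp_ofReal)
    ((continuous_row hF hy).intervalIntegrable _ _)]
  simp only [ofReal_zero, ofReal_one, zero_add] at hper ⊢
  rw [add_comm, hper, sub_self]

end Primitive

section Trace

open Complex Filter Topology
open UpperHalfPlane hiding I
open scoped MatrixGroups ModularForm Manifold

lemma slash_apply_ofComplex (w : ℤ) (F : ℍ → ℂ) (γ : SL(2, ℤ)) {z : ℂ} (hz : z ∈ UHP) :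
    (F ∣[w] γ) (ofComplex z) =
      (F ∘ ofComplex) ((γ 0 0 * z + γ 0 1) / (γ 1 0 * z + γ 1 1)) *
        (γ 1 0 * z + γ 1 1 : ℂ) ^ (-w) := by
  have hF : F = (F ∘ ofComplex) ∘ UpperHalfPlane.coe := by
    ext τ
    simp only [Function.comp_apply, ofComplex_apply]
  conv_lhs => rw [hF, slash_comp_coe_apply, ofComplex_apply_of_im_pos hz]

lemma integral_row_eq_zero_of_slash_eq {F : ℍ → ℂ} (hF : MDiff F)
    (hinv : ∀ γ : SL(2, ℤ), F ∣[(2 : ℤ)] γ = F) {y : ℝ} (hy : 0 < y) :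
    ∫ x in (0 : ℝ)..1, (F ∘ ofComplex) (x + y * I) = 0 := by
  refine integral_row_eq_zero (mdifferentiable_iff.mp hF) (fun z hz => ?_) (fun z hz => ?_) hy
  · have h := slash_apply_ofComplex 2 F ModularGroup.T hz
    rw [hinv] at h
    simpa [ModularGroup.T] using h.symm
  · have hz0 : z ≠ 0 := by
      rintro rfl
      simp [UHP] at hz
    have h := slash_apply_ofComplex 2 F ModularGroup.S hz
    rw [hinv] at h
    simp only [ModularGroup.S, Matrix.of_apply, Matrix.cons_val', Matrix.cons_val_zero,
      Matrix.cons_val_one, Matrix.cons_val_fin_one, Int.cast_zero, zero_mul, zero_add,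
      Int.cast_neg, Int.cast_one, one_mul, add_zero, zpow_neg, ← div_eq_mul_inv] at h
    rw [← Function.comp_apply (f := F), eq_div_iff (zpow_ne_zero 2 hz0), neg_div, one_div] at h
    rw [← h, mul_comm]
    norm_cast

lemma tendsto_integral_row_of_isZeroAtImInfty {h : ℍ → ℂ} (hh : IsZeroAtImInfty h) :
    Tendsto (fun y : ℝ => ∫ x in (0 : ℝ)..1, (h ∘ ofComplex) (x + y * I)) atTop (𝓝 0) := by
  refine Metric.tendsto_nhds.mpr fun ε hε => ?_
  have hsmall := Metric.tendsto_nhds.mp (hh.comp tendsto_comap_im_ofComplex) (ε / 2) (half_pos hε)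
  refine (eventually_comap.mp hsmall).mono fun y hy => ?_
  have hbound : ∀ x : ℝ, ‖(h ∘ ofComplex) (x + y * I)‖ ≤ ε / 2 := fun x => by
    simpa only [dist_zero_right] using (hy (x + y * I) (by simp)).le
  have hint := intervalIntegral.norm_integral_le_of_norm_le_const (a := (0 : ℝ)) (b := 1)
    fun x _ => hbound x
  rw [dist_zero_right]
  rw [sub_zero, abs_one, mul_one] at hint
  exact hint.trans_lt (half_lt_self hε)

variable {𝒢 : Subgroup (GL (Fin 2) ℝ)} [𝒢.IsFiniteRelIndex 𝒮ℒ] {w : ℤ}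
  (g : SlashInvariantForm 𝒢 w)

lemma mdifferentiable_trace (hg : MDiff g) : MDiff (SlashInvariantForm.trace 𝒮ℒ g) := by
  rw [SlashInvariantForm.coe_trace]
  exact .sum (Quotient.forall.mpr fun r _ => hg.slash w _)

lemma isZeroAtImInfty_trace_sub
    (hcusp : ∀ γ ∈ 𝒮ℒ, γ ∉ 𝒢 → IsZeroAtImInfty (g ∣[w] γ)) :
    IsZeroAtImInfty (⇑(SlashInvariantForm.trace 𝒮ℒ g) - ⇑g) := by
  classical
  let := Fintype.ofFinite (𝒮ℒ ⧸ 𝒢.subgroupOf 𝒮ℒ)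
  have htrivial : SlashInvariantForm.quotientFunc g ((1 : 𝒮ℒ) : 𝒮ℒ ⧸ 𝒢.subgroupOf 𝒮ℒ) = g :=
    (SlashInvariantForm.quotientFunc_mk g 1).trans (by simp)
  have hsum : ⇑(SlashInvariantForm.trace 𝒮ℒ g) - ⇑g =
      ∑ q ∈ Finset.univ.erase ((1 : 𝒮ℒ) : 𝒮ℒ ⧸ 𝒢.subgroupOf 𝒮ℒ),
        SlashInvariantForm.quotientFunc g q := by
    rw [SlashInvariantForm.coe_trace, ← Finset.add_sum_erase _ _ (Finset.mem_univ _), htrivial,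
      add_sub_cancel_left]
  rw [hsum, IsZeroAtImInfty, ZeroAtFilter, Finset.sum_fn, ← Finset.sum_const_zero]
  refine tendsto_finsetSum _ (Quotient.forall.mpr fun r hr => ?_)
  refine hcusp _ (inv_mem r.2) fun hmem => Finset.ne_of_mem_erase hr ?_
  exact QuotientGroup.eq.mpr (by simpa [Subgroup.mem_subgroupOf] using hmem)

/-- Modulo functions tending to zero at `∞`, the form agrees with its trace, a form of level one. -/
theorem tendsto_integral_row_of_isZero_at_other_cusps (g : SlashInvariantForm 𝒢 2) (hg : MDiff g)
    (hcusp : ∀ γ ∈ 𝒮ℒ, γ ∉ 𝒢 → IsZeroAtImInfty (g ∣[(2 : ℤ)] γ)) :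
    Tendsto (fun y : ℝ => ∫ x in (0 : ℝ)..1, (g ∘ ofComplex) (x + y * I)) atTop (𝓝 0) := by
  have htrace := mdifferentiable_trace g hg
  have hinv (γ : SL(2, ℤ)) : (SlashInvariantForm.trace 𝒮ℒ g : ℍ → ℂ) ∣[(2 : ℤ)] γ =
      SlashInvariantForm.trace 𝒮ℒ g :=
    SlashInvariantForm.slash_action_eqn _ _ (MonoidHom.mem_range.mpr ⟨γ, rfl⟩)
  have hlim := (tendsto_integral_row_of_isZeroAtImInfty (isZeroAtImInfty_trace_sub g hcusp)).neg
  rw [neg_zero] at hlim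
  refine hlim.congr' ((eventually_gt_atTop 0).mono fun y hy => ?_)
  have hsub := intervalIntegral.integral_sub (μ := MeasureTheory.volume)
    ((continuous_row (mdifferentiable_iff.mp htrace) hy).intervalIntegrable 0 1)
    ((continuous_row (mdifferentiable_iff.mp hg) hy).intervalIntegrable 0 1)
  rw [integral_row_eq_zero_of_slash_eq htrace hinv hy, zero_sub] at hsub
  exact neg_eq_iff_eq_neg.mpr hsub

end Trace

/-! ### Pairing a weakly holomorphic form with a theta series -/

section ConstantTerm

open Real Complex MeasureTheory

lemma hasSum_mul_prod {α β : Type*} {u : α → ℂ} {v : β → ℂ} {s t : ℂ} (hu : HasSum u s)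
    (hv : HasSum v t) : HasSum (fun p : α × β => u p.1 * v p.2) (s * t) :=
  hu.mul hv (summable_mul_of_summable_norm hu.summable.norm hv.summable.norm)

lemma integral_exp_row (m : ℤ) (y : ℝ) :
    ∫ x in (0 : ℝ)..1, cexp (2 * π * I * m * (x + y * I)) = if m = 0 then 1 else 0 := by
  split_ifs with hm
  · simp [hm]
  have hne : 2 * π * I * m ≠ 0 := mul_ne_zero two_pi_I_ne_zero (Int.cast_ne_zero.mpr hm)
  have hperiod : cexp (2 * π * I * m * (1 : ℝ)) = 1 := by
    rw [ofReal_one, mul_one, mul_comm, exp_int_mul_two_pi_mul_I]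
  simp only [mul_add, Complex.exp_add, intervalIntegral.integral_mul_const,
    integral_exp_mul_complex hne, hperiod]
  simp

lemma hasSum_integral_row {α : Type*} [Countable α] {a : α → ℂ} {n : α → ℤ} {F : ℂ → ℂ} {y : ℝ}
    (hF : ∀ x : ℝ, HasSum (fun i => a i * cexp (2 * π * I * n i * (x + y * I))) (F (x + y * I))) :
    HasSum (fun i => if n i = 0 then a i else 0) (∫ x in (0 : ℝ)..1, F (x + y * I)) := by
  have hterm (i : α) : ∫ x in (0 : ℝ)..1, a i * cexp (2 * π * I * n i * (x + y * I)) =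
      if n i = 0 then a i else 0 := by
    rw [intervalIntegral.integral_const_mul, integral_exp_row, mul_ite, mul_one, mul_zero]
  have hnorm (i : α) (x : ℝ) : ‖a i * cexp (2 * π * I * n i * (x + y * I))‖ =
      ‖a i * cexp (2 * π * I * n i * ((0 : ℝ) + y * I))‖ := by
    simp [Complex.norm_exp]
  simp only [← hterm]
  exact intervalIntegral.hasSum_integral_of_dominated_convergence
    (fun i _ => ‖a i * cexp (2 * π * I * n i * ((0 : ℝ) + y * I))‖)
    (fun i => Continuous.aestronglyMeasurable (by fun_prop))
    (fun i => .of_forall fun x _ => (hnorm i x).le)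
    (.of_forall fun _ _ => (hF 0).summable.norm)
    intervalIntegrable_const
    (.of_forall fun x _ => hF x)

end ConstantTerm

section Pairing

open Real Complex Matrix Filter Topology CongruenceSubgroup ModularForm
open UpperHalfPlane hiding I I_re I_im re im
open scoped MatrixGroups Manifold

lemma jacobiSym_pow_mul_self_of_dvd {D : ℕ} (k : ℕ) {γ : SL(2, ℤ)}
    (hγ : (D : ℤ) ∣ γ 1 0) :
    (jacobiSym (γ 1 1) D : ℂ) ^ k * (jacobiSym (γ 1 1) D : ℂ) ^ k = 1 := by
  obtain ⟨e, he⟩ := hγ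
  have hdet := SL2_det_eq_one γ
  have hcop : IsCoprime (γ 1 1) (D : ℤ) :=
    ⟨γ 0 0, -(γ 0 1 * e), by rw [he] at hdet; linear_combination hdet⟩
  rw [← mul_pow, ← sq]
  norm_cast
  rw [jacobiSym.sq_one (Int.isCoprime_iff_gcd_eq_one.mp hcop), one_pow]

namespace EvenLattice

variable {ι : Type*} [Fintype ι] [DecidableEq ι] {k D : ℕ} (L : EvenLattice ι k D)
  {P : (ι → ℝ) → ℂ} {f : ℂ → ℂ} {c : ℤ → ℂ}

lemma hasSum_constantTerm_mul_theta (hP : HasExpGrowth P)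
    (hf : ∀ τ ∈ UHP, HasSum (fun m : ℤ => c m * cexp (2 * π * I * m * τ)) (f τ))
    {y : ℝ} (hy : 0 < y) :
    HasSum (fun x : ι → ℤ => c (-L.q x) * P (L.realGram *ᵥ realVec x))
      (∫ x in (0 : ℝ)..1, f (x + y * I) * L.theta P (x + y * I)) := by
  have hprod (τ : ℂ) (hτ : τ ∈ UHP) : HasSum (fun p : ℤ × (ι → ℤ) =>
      c p.1 * P (L.realGram *ᵥ realVec p.2) * cexp (2 * π * I * (p.1 + L.q p.2 : ℤ) * τ))
      (f τ * L.theta P τ) := by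
    refine (hasSum_mul_prod (hf τ hτ) (L.summable_theta hP hτ).hasSum).congr_fun fun p => ?_
    rw [Int.cast_add, mul_add, add_mul, Complex.exp_add]
    ring
  have hrow := hasSum_integral_row (F := f * L.theta P) fun x =>
    hprod _ (add_mul_I_mem_UHP hy x)
  have hinj : Function.Injective fun x : ι → ℤ => (-L.q x, x) := fun x x' h => (Prod.ext_iff.mp h).2
  rw [← hinj.hasSum_iff] at hrow
  · simpa [Function.comp_def] using hrow
  · exact fun p hp => if_neg fun h => hp ⟨p.2, Prod.ext (by simp only; lia) rfl⟩

lemma mul_theta_slash_eq (hD : D % 4 = 3) (hP : IsPoissonWeight L.realGram k 1 P)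
    (hf : IsWeaklyHolInfty D (fun a => (chiK D a : ℂ) ^ k) (-(k : ℤ)) f c)
    {γ : SL(2, ℤ)} (hγ : (D : ℤ) ∣ γ 1 0) :
    ((f * L.theta P) ∘ UpperHalfPlane.coe) ∣[(2 : ℤ)] γ = (f * L.theta P) ∘ UpperHalfPlane.coe := by
  have hfγ : (f ∘ UpperHalfPlane.coe) ∣[-(k : ℤ)] γ =
      (jacobiSym (γ 1 1) D : ℂ) ^ k • (f ∘ UpperHalfPlane.coe) := by
    ext τ
    rw [← slash_matR, hf.transform γ hγ τ τ.im_pos, chiK_eq_jacobiSym hD]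
    rfl
  rw [show (2 : ℤ) = -(k : ℤ) + (k + 2 * (1 : ℕ)) by simp, Pi.mul_comp, mul_slash_SL2, hfγ,
    L.theta_slash_eq hD hP hγ, smul_mul_smul_comm, jacobiSym_pow_mul_self_of_dvd k hγ,
    one_smul]

lemma isZeroAtImInfty_mul_theta_slash {χ : ℤ → ℂ} (hP : IsPoissonWeight L.realGram k 1 P)
    (hP0 : P 0 = 0) (hf : IsWeaklyHolInfty D χ (-(k : ℤ)) f c)
    {γ : SL(2, ℤ)} (hγ : ¬(D : ℤ) ∣ γ 1 0) :
    IsZeroAtImInfty (((f * L.theta P) ∘ UpperHalfPlane.coe) ∣[(2 : ℤ)] γ) := by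
  obtain ⟨C, hC⟩ := hf.bdd_at_other_cusps γ hγ
  have hbdd : IsBoundedAtImInfty ((f ∘ UpperHalfPlane.coe) ∣[-(k : ℤ)] γ) :=
    isBoundedAtImInfty_iff.mpr ⟨C, 1, fun τ hτ => slash_matR (-(k : ℤ)) f γ τ ▸ hC τ hτ⟩
  have hzero := L.isZeroAtImInfty_theta_slash hP hP0 fun h => hγ (h ▸ dvd_zero _)
  rw [show (2 : ℤ) = -(k : ℤ) + (k + 2 * (1 : ℕ)) by simp, Pi.mul_comp, mul_slash_SL2]
  exact hbdd.mul_zeroAtFilter hzero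

/-- The product of a weakly holomorphic form of weight `-k` with a theta series of weight `k + 2`,
as a form of weight two on `Γ₀(D)`. -/
def pairingForm (hD : D % 4 = 3) (hP : IsPoissonWeight L.realGram k 1 P)
    (hf : IsWeaklyHolInfty D (fun a => (chiK D a : ℂ) ^ k) (-(k : ℤ)) f c) :
    SlashInvariantForm (Gamma0 D) 2 where
  toFun := (f * L.theta P) ∘ UpperHalfPlane.coe
  slash_action_eq' := by
    rintro _ ⟨γ, hγ, rfl⟩
    exact L.mul_theta_slash_eq hD hP hf ((ZMod.intCast_zmod_eq_zero_iff_dvd _ _).mp hγ)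

theorem hasSum_coeff_mul_weight_eq_zero (hD : D % 4 = 3) (hP : IsPoissonWeight L.realGram k 1 P)
    (hP0 : P 0 = 0) (hf : IsWeaklyHolInfty D (fun a => (chiK D a : ℂ) ^ k) (-(k : ℤ)) f c) :
    HasSum (fun x : ι → ℤ => c (-L.q x) * P (L.realGram *ᵥ realVec x)) 0 := by
  have : NeZero D := ⟨by omega⟩
  have hsum {y : ℝ} (hy : 0 < y) := L.hasSum_constantTerm_mul_theta hP.hasExpGrowth hf.fourier hy
  have hlim := tendsto_integral_row_of_isZero_at_other_cusps (L.pairingForm hD hP hf)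
    (mdifferentiable_comp_coe (hf.holo.mul (L.differentiableOn_theta hP.hasExpGrowth))) <| by
      rintro _ ⟨γ, rfl⟩ hγ
      refine L.isZeroAtImInfty_mul_theta_slash hP hP0 hf fun hdvd => hγ ⟨γ, ?_, rfl⟩
      exact (ZMod.intCast_zmod_eq_zero_iff_dvd _ _).mpr hdvd
  have hconst : ∀ᶠ y : ℝ in atTop,
      ∫ x in (0 : ℝ)..1, (L.pairingForm hD hP hf ∘ ofComplex) (x + y * I) =
        ∫ x in (0 : ℝ)..1, f (x + (1 : ℝ) * I) * L.theta P (x + (1 : ℝ) * I) := by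
    filter_upwards [eventually_gt_atTop 0] with y hy
    rw [← (hsum hy).unique (hsum one_pos)]
    refine intervalIntegral.integral_congr fun x _ => ?_
    simp [pairingForm, ofComplex_apply_of_im_pos (add_mul_I_mem_UHP hy x)]
  exact tendsto_nhds_unique tendsto_const_nhds (hlim.congr' hconst) ▸ hsum one_pos

end EvenLattice

end Pairing

/-! ### Integrality for an even lattice -/

section HarmonicMonomial

open Matrix

variable {ι : Type*} [Fintype ι] [DecidableEq ι] {A : Matrix ι ι ℝ}

lemma sum_inv_mul_apply (hA : A.PosDef) : ∑ a, ∑ b, A⁻¹ a b * A a b = Fintype.card ι := by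
  have hinv : A⁻¹ * A = 1 := nonsing_inv_mul _ ((isUnit_iff_isUnit_det _).mp hA.isUnit)
  have hsymm (a b : ι) : A a b = A b a := by simpa using hA.isHermitian.apply b a
  calc ∑ a, ∑ b, A⁻¹ a b * A a b = (A⁻¹ * A).trace :=
        Finset.sum_congr rfl fun a _ => Finset.sum_congr rfl fun b _ => by rw [hsymm a b]
    _ = Fintype.card ι := by rw [hinv, trace_one]

/-- The matrix of the projection of the quadratic monomial `yᵢ yⱼ` to the quadratic forms that are
harmonic for the metric of `A`. -/
def harmonicMonomial (A : Matrix ι ι ℝ) (i j : ι) : Matrix ι ι ℝ :=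
  single i j 1 - (A i j / Fintype.card ι) • A⁻¹

lemma sum_harmonicMonomial_mul_apply (hA : A.PosDef) (i j : ι) :
    ∑ a, ∑ b, harmonicMonomial A i j a b * A a b = 0 := by
  have : Nonempty ι := ⟨i⟩
  have hsingle : ∑ a, ∑ b, single i j (1 : ℝ) a b * A a b = A i j := by
    simp [single_apply, ite_and]
  simp only [harmonicMonomial, Matrix.sub_apply, Matrix.smul_apply, smul_eq_mul, sub_mul, mul_assoc,
    Finset.sum_sub_distrib, ← Finset.mul_sum, hsingle, sum_inv_mul_apply hA]
  rw [div_mul_cancel₀ _ (Nat.cast_ne_zero.mpr Fintype.card_ne_zero), sub_self]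

lemma quadForm_harmonicMonomial_mulVec (hA : A.PosDef) (i j : ι) (x : ι → ℝ) :
    quadForm (harmonicMonomial A i j) (A *ᵥ x) =
      (A *ᵥ x) i * (A *ᵥ x) j - A i j / Fintype.card ι * quadForm A x := by
  have hsingle (y : ι → ℝ) : y ⬝ᵥ single i j 1 *ᵥ y = y i * y j := by
    rw [single_mulVec, one_mul]
    exact dotProduct_single ..
  rw [← quadForm_inv_mulVec hA x, quadForm, quadForm, harmonicMonomial, sub_mulVec, smul_mulVec,
    dotProduct_sub, dotProduct_smul, hsingle, smul_eq_mul]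

end HarmonicMonomial

section Integrality

open Matrix

namespace EvenLattice

variable {ι : Type*} [Fintype ι] [DecidableEq ι] {k D : ℕ} (L : EvenLattice ι k D)
  {f : ℂ → ℂ} {c : ℤ → ℂ} {μ : ℂ}

/-- If `g` divides all the entries, then `g ^ (2k)` divides the determinant `D ^ k`, so `g ^ 2`
divides `D`. -/
lemma exists_sum_mul_gram_eq_one (hk : k ≠ 0) (hD : Squarefree D) :
    ∃ u : ι × ι → ℤ, ∑ p, u p * L.gram p.1 p.2 = 1 := by
  set entries : ι × ι → ℤ := fun p => L.gram p.1 p.2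
  obtain ⟨g, hg⟩ := (IsPrincipalIdealRing.principal (Ideal.span (Set.range entries))).principal
  rw [Ideal.submodule_span_eq] at hg
  have hdvd (i j : ι) : g ∣ L.gram i j := by
    rw [← Ideal.mem_span_singleton, ← hg]
    exact Ideal.subset_span ⟨(i, j), rfl⟩
  choose B hB using hdvd
  have hgram : L.gram = g • Matrix.of B := by
    ext i j
    simp [hB]
  have hdet := L.det_gram
  rw [hgram, det_smul, L.card_eq, pow_mul] at hdet
  have hsq : g * g ∣ D := sq g ▸ (Int.pow_dvd_pow_iff hk).mp (Dvd.intro _ hdet)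
  have hunit : IsUnit g := Int.squarefree_natCast.mpr hD g hsq
  refine Ideal.mem_span_range_iff_exists_fun.mp (?_ : (1 : ℤ) ∈ Ideal.span (Set.range entries))
  rw [hg, Ideal.span_singleton_eq_top.mpr hunit]
  trivial

lemma hasSum_coeff_mul_gram_mulVec (hk : k ≠ 0) (hD : D % 4 = 3)
    (hf : IsWeaklyHolInfty D (fun a => (chiK D a : ℂ) ^ k) (-(k : ℤ)) f c)
    (hμ : HasSum (fun x : ι → ℤ => (L.q x : ℂ) * c (-L.q x)) (k * μ)) (i j : ι) :
    HasSum (fun x : ι → ℤ => c (-L.q x) * ((L.gram *ᵥ x) i * (L.gram *ᵥ x) j : ℤ))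
      (L.gram i j * μ) := by
  have hpair := L.hasSum_coeff_mul_weight_eq_zero hD
    (isPoissonWeight_quadWeight L.posDef_realGram L.card_eq
      (sum_harmonicMonomial_mul_apply L.posDef_realGram i j)) (by simp [quadWeight, quadForm]) hf
  have hk' : (k : ℂ) ≠ 0 := Nat.cast_ne_zero.mpr hk
  convert hpair.add (hμ.mul_left (L.gram i j / k : ℂ)) using 1
  · ext x
    rw [quadWeight, quadForm_harmonicMonomial_mulVec L.posDef_realGram, quadForm_realVec,
      realGram_mulVec_realVec, L.card_eq]
    simp only [realVec, realGram, map_apply]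
    push_cast
    field_simp
    ring
  · field_simp
    ring

theorem exists_eq_intCast_of_hasSum (hk : k ≠ 0) (hD : D % 4 = 3) (hDsf : Squarefree D)
    (hf : IsWeaklyHolInfty D (fun a => (chiK D a : ℂ) ^ k) (-(k : ℤ)) f c)
    (hc : ∀ m ≤ 0, ∃ z : ℤ, c m = z)
    (hμ : HasSum (fun x : ι → ℤ => (L.q x : ℂ) * c (-L.q x)) (k * μ)) : ∃ z : ℤ, μ = z := by
  obtain ⟨u, hu⟩ := L.exists_sum_mul_gram_eq_one hk hDsf
  choose! z hz using hc
  have hcomb : HasSum (fun x : ι → ℤ => ∑ p : ι × ι,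
      (u p : ℂ) * (c (-L.q x) * ((L.gram *ᵥ x) p.1 * (L.gram *ᵥ x) p.2 : ℤ))) μ := by
    have hone : ∑ p : ι × ι, (u p : ℂ) * (L.gram p.1 p.2 * μ) = μ := by
      simp only [← mul_assoc, ← Finset.sum_mul]
      rw [show ∑ p, (u p : ℂ) * L.gram p.1 p.2 = 1 by exact_mod_cast hu, one_mul]
    exact hone ▸ hasSum_sum fun p _ =>
      (L.hasSum_coeff_mul_gram_mulVec hk hD hf hμ p.1 p.2).mul_left (u p : ℂ)
  have hclosed : IsClosed (Set.range ((↑) : ℤ → ℂ)) := Complex.isClosed_range_intCast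
  obtain ⟨w, hw⟩ := hclosed.mem_of_tendsto hcomb <| .of_forall fun s =>
    ⟨∑ x ∈ s, ∑ p, u p * (z (-L.q x) * ((L.gram *ᵥ x) p.1 * (L.gram *ᵥ x) p.2)), by
      have hcoeff (x : ι → ℤ) := hz (-L.q x) (neg_nonpos.mpr (L.q_nonneg x))
      simp only [hcoeff]
      push_cast
      rfl⟩
  exact ⟨w, hw.symm⟩

end EvenLattice

end Integrality

/-! ### The even lattice of a self-dual hermitian lattice -/

section UnimodularPairing

open Matrix

variable {ι : Type*} [Fintype ι]

lemma quadForm_ratCast_nonneg {A : Matrix ι ι ℝ} (hA : ∀ x : ι → ℤ, 0 ≤ quadForm A (realVec x))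
    (x : ι → ℚ) : 0 ≤ quadForm A fun i => x i := by
  obtain ⟨⟨d, hd⟩, hx⟩ :=
    IsLocalization.exist_integer_multiples_of_finite (nonZeroDivisors ℤ) x
  choose y hy using hx
  have hsmul : realVec y = (d : ℝ) • fun i => (x i : ℝ) := by
    ext i
    have hi : ((y i : ℤ) : ℚ) = d * x i := by simpa using hy i
    simpa [realVec] using congrArg (Rat.cast : ℚ → ℝ) hi
  have hd0 : (d : ℝ) ≠ 0 := Int.cast_ne_zero.mpr (nonZeroDivisors.ne_zero hd)
  have hnonneg := hA y
  rw [hsmul, quadForm_smul] at hnonneg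
  exact nonneg_of_mul_nonneg_right hnonneg (by positivity)

lemma posDef_map_intCast {A : Matrix ι ι ℤ} (hsymm : A.IsSymm)
    (hpos : ∀ x ≠ 0, 0 < x ⬝ᵥ A *ᵥ x) : (A.map (Int.cast : ℤ → ℝ)).PosDef := by
  classical
  have hdet : A.det ≠ 0 := fun h => by
    obtain ⟨x, hx, hAx⟩ := exists_mulVec_eq_zero_iff.mpr h
    simpa [hAx] using hpos x hx
  have hint (x : ι → ℤ) : 0 ≤ quadForm (A.map (Int.cast : ℤ → ℝ)) (realVec x) := by
    rw [quadForm_map_intCast_realVec]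
    obtain rfl | hx := eq_or_ne x 0
    · simp
    · exact_mod_cast (hpos x hx).le
  have hdense : DenseRange (Pi.map fun (_ : ι) (r : ℚ) => (r : ℝ)) :=
    DenseRange.piMap fun _ => Rat.denseRange_cast
  have hreal (x : ι → ℝ) : 0 ≤ quadForm (A.map (Int.cast : ℤ → ℝ)) x :=
    hdense.induction_on (p := fun x => 0 ≤ quadForm (A.map (Int.cast : ℤ → ℝ)) x) x
      (isClosed_le continuous_const (continuous_quadForm _)) (quadForm_ratCast_nonneg hint)
  have hherm : (A.map (Int.cast : ℤ → ℝ)).IsHermitian := by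
    rw [IsHermitian, conjTranspose_eq_transpose_of_trivial, ← transpose_map, hsymm.eq]
  have hsemi : (A.map (Int.cast : ℤ → ℝ)).PosSemidef :=
    .of_dotProduct_mulVec_nonneg hherm fun x => by simpa [quadForm] using hreal x
  rw [hsemi.posDef_iff_det_ne_zero, det_map_intCast]
  exact_mod_cast hdet

variable [DecidableEq ι]

/-- If `E` is unimodular and `M ^ 2 = -D`, then `Mᵀ E` has determinant `± D ^ k`, and the sign is
positive by positive definiteness. -/
lemma det_transpose_mul_eq_pow {k D : ℕ} (hcard : Fintype.card ι = 2 * k) {M E : Matrix ι ι ℤ}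
    (hM : M * M = -((D : ℤ) • 1)) (hE : IsUnit E) (hpos : 0 < (Mᵀ * E).det) :
    (Mᵀ * E).det = (D : ℤ) ^ k := by
  have hMdet : M.det ^ 2 = ((D : ℤ) ^ k) ^ 2 := by
    have h := congrArg det hM
    rw [det_mul, det_neg, det_smul, det_one, hcard, pow_mul, neg_one_sq, one_pow, one_mul,
      mul_one, ← sq] at h
    rw [h, ← pow_mul, mul_comm]
  have hEdet : E.det ^ 2 = 1 := Int.isUnit_sq ((isUnit_iff_isUnit_det E).mp hE)
  rw [← sq_eq_sq₀ hpos.le (by positivity), det_mul, det_transpose, mul_pow, hMdet, hEdet, mul_one]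

/-- The even lattice with Gram matrix `Mᵀ E`, where `E` is unimodular and `M ^ 2 = -D`. -/
def EvenLattice.ofUnimodular {k D : ℕ} (hD : Odd D) (hcard : Fintype.card ι = 2 * k)
    (M E : Matrix ι ι ℤ) (hM : M * M = -((D : ℤ) • 1)) (hE : IsUnit E) (hsymm : (Mᵀ * E).IsSymm)
    (heven : ∀ x, Even (x ⬝ᵥ (Mᵀ * E) *ᵥ x)) (hpos : ∀ x ≠ 0, 0 < x ⬝ᵥ (Mᵀ * E) *ᵥ x) :
    EvenLattice ι k D where
  gram := Mᵀ * E
  dualGram := -(E⁻¹ * Mᵀ)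
  card_eq := hcard
  odd_level := hD
  gram_mul_dualGram := by
    rw [mul_neg, mul_assoc, ← mul_assoc E,
      mul_nonsing_inv _ ((isUnit_iff_isUnit_det E).mp hE), one_mul, ← transpose_mul, hM]
    simp
  posDef := posDef_map_intCast hsymm hpos
  even := heven
  det_gram := by
    have h := (posDef_map_intCast hsymm hpos).det_pos
    rw [det_map_intCast] at h
    exact det_transpose_mul_eq_pow hcard hM hE (by exact_mod_cast h)

end UnimodularPairing

section RankTower

open Module

lemma finrank_mul_finrank_of_isIntegral (R S M : Type*) [CommRing R] [IsDomain R] [CommRing S]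
    [IsDomain S] [Algebra R S] [Module.Free R S] [Module.Finite R S] [AddCommGroup M] [Module R M]
    [Module S M] [IsScalarTower R S M] [Module.Finite S M] :
    finrank R S * finrank S M = finrank R M := by
  have : Module.Finite R M := .trans S M
  obtain ⟨v, hv⟩ := exists_linearIndependent_of_le_finrank (R := S) (M := M) le_rfl
  let N := Submodule.span S (Set.range v)
  let b : Basis (Fin (finrank S M)) S N := Basis.span hv
  have hN : finrank S N = finrank S M := by simp [finrank_eq_card_basis b]
  have htors : IsTorsion S (M ⧸ N) := by
    have hadd := N.finrank_quotient_add_finrank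
    exact finrank_eq_zero_iff_isTorsion.mp (by lia)
  have htors' : IsTorsion R (M ⧸ N) := fun {x} => by
    obtain ⟨a, ha⟩ := htors (x := x)
    obtain ⟨r, hr, s, hs⟩ :=
      (Algebra.IsAlgebraic.isAlgebraic (R := R) (a : S)).exists_nonzero_dvd a.2
    refine ⟨⟨r, mem_nonZeroDivisors_of_ne_zero hr⟩, ?_⟩
    change r • x = 0
    rw [← algebraMap_smul S, hs, mul_comm, mul_smul]
    exact (congrArg (s • ·) ha).trans (smul_zero s)
  have : Module.Free S N := .of_basis b
  have hadd := (N.restrictScalars R).finrank_quotient_add_finrank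
  have hzero : finrank R (M ⧸ N.restrictScalars R) = 0 :=
    finrank_eq_zero_iff_isTorsion.mpr htors'
  rw [← hN, finrank_mul_finrank, ← hadd, hzero, zero_add]
  rfl

end RankTower

section RingOfIntegers

variable {D : ℕ}

/-- The generator `ω = (1 + √-D) / 2` of the ring of integers. -/
def okOmega (D : ℕ) : Ok D := ⟨okGen D, Subring.subset_closure rfl⟩

/-- The element `√-D` of the ring of integers. -/
def okSqrt (D : ℕ) : Ok D := 2 * okOmega D - 1

lemma okGen_conj (D : ℕ) : starRingEnd ℂ (okGen D) = 1 - okGen D := by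
  simp only [okGen, map_div₀, map_add, map_one, map_mul, Complex.conj_ofReal, Complex.conj_I,
    map_ofNat]
  ring

lemma four_mul_okGen_sq (D : ℕ) : 4 * okGen D ^ 2 = 4 * okGen D - (D + 1) := by
  have hsqrt : (Real.sqrt D : ℂ) ^ 2 = D := by
    exact_mod_cast Real.sq_sqrt (Nat.cast_nonneg D)
  rw [okGen]
  linear_combination Complex.I ^ 2 * hsqrt + (D : ℂ) * Complex.I_sq

lemma okSqrt_mul_self (D : ℕ) : okSqrt D * okSqrt D = -(D : ℤ) := by
  ext
  have hval : (okSqrt D : ℂ) = 2 * okGen D - 1 := rfl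
  rw [Subring.coe_mul, hval]
  push_cast
  linear_combination four_mul_okGen_sq D

lemma exists_okGen_sq_eq (hD : D % 4 = 3) : ∃ t : ℤ, okGen D ^ 2 = okGen D - t := by
  obtain ⟨t, ht⟩ : 4 ∣ D + 1 := by lia
  have ht' : (D : ℂ) + 1 = 4 * t := by exact_mod_cast ht
  refine ⟨t, ?_⟩
  push_cast
  linear_combination four_mul_okGen_sq D / 4 - ht' / 4

lemma exists_okOmega_mul_self_eq (hD : D % 4 = 3) :
    ∃ t : ℤ, okOmega D * okOmega D = okOmega D - t := by
  obtain ⟨t, ht⟩ := exists_okGen_sq_eq hD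
  exact ⟨t, Subtype.ext (by simpa [okOmega, sq] using ht)⟩

lemma exists_eq_intCast_add_mul_okGen (hD : D % 4 = 3) {z : ℂ} (hz : z ∈ Ok D) :
    ∃ u v : ℤ, z = u + v * okGen D := by
  obtain ⟨t, ht⟩ := exists_okGen_sq_eq hD
  induction hz using Subring.closure_induction with
  | mem x hx => exact ⟨0, 1, by simpa using hx⟩
  | zero => exact ⟨0, 0, by simp⟩
  | one => exact ⟨1, 0, by simp⟩
  | add x y _ _ hx hy =>
    obtain ⟨u, v, rfl⟩ := hx
    obtain ⟨u', v', rfl⟩ := hy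
    exact ⟨u + u', v + v', by push_cast; ring⟩
  | neg x _ hx =>
    obtain ⟨u, v, rfl⟩ := hx
    exact ⟨-u, -v, by push_cast; ring⟩
  | mul x y _ _ hx hy =>
    obtain ⟨u, v, rfl⟩ := hx
    obtain ⟨u', v', rfl⟩ := hy
    refine ⟨u * u' - v * v' * t, u * v' + v * u' + v * v', ?_⟩
    push_cast
    linear_combination (v : ℂ) * v' * ht

lemma exists_eq_intCast_add_mul_okOmega (hD : D % 4 = 3) (a : Ok D) :
    ∃ u v : ℤ, a = u + v * okOmega D := by
  obtain ⟨u, v, h⟩ := exists_eq_intCast_add_mul_okGen hD a.2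
  exact ⟨u, v, Subtype.ext (by simpa [okOmega] using h)⟩

lemma linearIndependent_one_okOmega (hD : 0 < D) : LinearIndependent ℤ ![1, okOmega D] := by
  refine LinearIndependent.pair_iff.mpr fun u v h => ?_
  have h : (u : ℂ) + v * okGen D = 0 := by
    simpa [okOmega] using congrArg (Subtype.val : Ok D → ℂ) h
  have hv : v = 0 := by simpa [okGen, hD.ne'] using congrArg Complex.im h
  subst hv
  simpa using h

/-- The basis `1, ω` of the ring of integers over `ℤ`. -/
def okBasis (hD : D % 4 = 3) : Module.Basis (Fin 2) ℤ (Ok D) :=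
  .mk (v := ![1, okOmega D]) (linearIndependent_one_okOmega (by lia)) fun a _ => by
    obtain ⟨u, v, rfl⟩ := exists_eq_intCast_add_mul_okOmega hD a
    rw [← zsmul_one (u : ℤ), ← zsmul_eq_mul]
    exact add_mem (Submodule.smul_mem _ _ (Submodule.subset_span ⟨0, rfl⟩))
      (Submodule.smul_mem _ _ (Submodule.subset_span ⟨1, rfl⟩))

/-- The `ℤ`-linear form `u + v ω ↦ v` on the ring of integers, which generates the dual of the
ring of integers as a module over it. -/
def omegaCoord (hD : D % 4 = 3) : Ok D →ₗ[ℤ] ℤ := (okBasis hD).coord 1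

lemma omegaCoord_intCast_add_mul (hD : D % 4 = 3) (u v : ℤ) :
    omegaCoord hD (u + v * okOmega D) = v := by
  have hrepr : (u : Ok D) + v * okOmega D = u • okBasis hD 0 + v • okBasis hD 1 := by
    simp [okBasis]
  simp [hrepr, omegaCoord, -zsmul_eq_mul]

lemma coe_omegaCoord_okSqrt_mul (hD : D % 4 = 3) (a : Ok D) :
    (omegaCoord hD (okSqrt D * a) : ℂ) = a + starRingEnd ℂ a := by
  obtain ⟨u, v, rfl⟩ := exists_eq_intCast_add_mul_okOmega hD a
  obtain ⟨t, ht⟩ := exists_okOmega_mul_self_eq hD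
  have hmul : okSqrt D * (u + v * okOmega D) =
      ((-u - 2 * v * t : ℤ) : Ok D) + ((2 * u + v : ℤ) : Ok D) * okOmega D := by
    rw [okSqrt]
    push_cast
    linear_combination 2 * (v : Ok D) * ht
  rw [hmul, omegaCoord_intCast_add_mul]
  simp only [okOmega, Subring.coe_add, Subring.coe_mul, Subring.coe_intCast, map_add, map_mul,
    map_intCast, okGen_conj]
  push_cast
  ring

lemma exists_omegaCoord_comp_eq (hD : D % 4 = 3) {V : Type*} [AddCommGroup V] [Module (Ok D) V]
    (l : V →ₗ[ℤ] ℤ) : ∃ φ : V →ₗ[Ok D] Ok D, ∀ x, omegaCoord hD (φ x) = l x := by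
  obtain ⟨t, ht⟩ := exists_okOmega_mul_self_eq hD
  let φ (x : V) : Ok D := (l (okOmega D • x) - l x : ℤ) + (l x : ℤ) * okOmega D
  have hφ_add (x y : V) : φ (x + y) = φ x + φ y := by
    simp only [φ, smul_add, map_add]
    push_cast
    ring
  have hφ_omega (x : V) : φ (okOmega D • x) = okOmega D * φ x := by
    have hl : l (okOmega D • okOmega D • x) = l (okOmega D • x) - t * l x := by
      rw [← mul_smul, ht, sub_smul, Int.cast_smul_eq_zsmul, map_sub, map_zsmul, smul_eq_mul]
    simp only [φ, hl]
    push_cast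
    linear_combination -(l x : Ok D) * ht
  have hφ_zsmul (m : ℤ) (x : V) : φ (m • x) = m • φ x := map_zsmul (AddMonoidHom.mk' φ hφ_add) m x
  have hφ_smul (a : Ok D) (x : V) : φ (a • x) = a • φ x := by
    obtain ⟨u, v, rfl⟩ := exists_eq_intCast_add_mul_okOmega hD a
    rw [add_smul, mul_smul, Int.cast_smul_eq_zsmul, Int.cast_smul_eq_zsmul, hφ_add, hφ_zsmul,
      hφ_zsmul, hφ_omega, smul_eq_mul, zsmul_eq_mul, zsmul_eq_mul]
    ring
  exact ⟨⟨⟨φ, hφ_add⟩, hφ_smul⟩, fun x => omegaCoord_intCast_add_mul hD _ _⟩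

end RingOfIntegers

section SelfDualLattice

open Matrix

/-- `h` is a self-dual positive definite hermitian form on the `Ok D`-module `V`, with values in
`Ok D` and with associated integral quadratic form `Q`. -/
structure IsSelfDualHermitian (D : ℕ) {V : Type*} [AddCommGroup V] [Module (Ok D) V]
    (h : V → V → ℂ) (Q : V → ℤ) : Prop where
  mem (x y : V) : h x y ∈ Ok D
  add_left (x x' y : V) : h (x + x') y = h x y + h x' y
  smul_left (a : Ok D) (x y : V) : h (a • x) y = a * h x y
  conj_symm (x y : V) : h y x = starRingEnd ℂ (h x y)
  quad_eq (x : V) : (Q x : ℂ) = h x x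
  quad_pos (x : V) : x ≠ 0 → 0 < Q x
  exists_eq (φ : V →ₗ[Ok D] Ok D) : ∃ y, ∀ x, (φ x : ℂ) = h x y

variable {D k : ℕ} {V : Type*} [AddCommGroup V] [Module (Ok D) V]

namespace IsSelfDualHermitian

variable {h : V → V → ℂ} {Q : V → ℤ}

lemma add_right (hh : IsSelfDualHermitian D h Q) (x y y' : V) : h x (y + y') = h x y + h x y' := by
  rw [hh.conj_symm, hh.add_left, map_add, ← hh.conj_symm, ← hh.conj_symm]

lemma isTorsionFree (hh : IsSelfDualHermitian D h Q) : Module.IsTorsionFree ℤ V := by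
  refine .of_smul_eq_zero fun m x hmx => ?_
  by_contra! hne
  have hsmul (a : Ok D) (ha : a • x = 0) : (a : ℂ) * Q x = 0 := by
    rw [hh.quad_eq, ← hh.smul_left, ha, ← zero_smul (Ok D) (0 : V), hh.smul_left]
    simp
  have hQ := hsmul m (by rwa [Int.cast_smul_eq_zsmul])
  simp [hne.1, (hh.quad_pos x hne.2).ne'] at hQ

/-- The hermitian form, with values in the ring of integers. -/
def toOk (hh : IsSelfDualHermitian D h Q) (x y : V) : Ok D := ⟨h x y, hh.mem x y⟩

lemma toOk_add_left (hh : IsSelfDualHermitian D h Q) (x x' y : V) :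
    hh.toOk (x + x') y = hh.toOk x y + hh.toOk x' y := Subtype.ext (hh.add_left x x' y)

lemma toOk_add_right (hh : IsSelfDualHermitian D h Q) (x y y' : V) :
    hh.toOk x (y + y') = hh.toOk x y + hh.toOk x y' := Subtype.ext (hh.add_right x y y')

lemma toOk_smul_left (hh : IsSelfDualHermitian D h Q) (a : Ok D) (x y : V) :
    hh.toOk (a • x) y = a * hh.toOk x y := Subtype.ext (hh.smul_left a x y)

/-- The alternating form `(h(x, y) - h(y, x)) / √-D`, which is unimodular over `ℤ`. -/
def altForm (hh : IsSelfDualHermitian D h Q) (hD : D % 4 = 3) : V →ₗ[ℤ] V →ₗ[ℤ] ℤ :=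
  .mk₂ ℤ (fun x y => omegaCoord hD (hh.toOk x y))
    (fun x x' y => by rw [toOk_add_left, map_add])
    (fun m x y => by
      rw [← Int.cast_smul_eq_zsmul (Ok D), toOk_smul_left, ← zsmul_eq_mul, map_zsmul])
    (fun x y y' => by rw [toOk_add_right, map_add])
    (fun m x y => (AddMonoidHom.mk' (fun y => omegaCoord hD (hh.toOk x y))
      fun y y' => by rw [toOk_add_right, map_add]).map_zsmul _ _)

lemma altForm_apply (hh : IsSelfDualHermitian D h Q) (hD : D % 4 = 3) (x y : V) :
    hh.altForm hD x y = omegaCoord hD (hh.toOk x y) := rfl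

lemma coe_altForm_okSqrt_smul (hh : IsSelfDualHermitian D h Q) (hD : D % 4 = 3) (x y : V) :
    (hh.altForm hD (okSqrt D • x) y : ℂ) = h x y + h y x := by
  rw [hh.conj_symm x y, altForm_apply, toOk_smul_left, coe_omegaCoord_okSqrt_mul]
  rfl

lemma altForm_okSqrt_smul_comm (hh : IsSelfDualHermitian D h Q) (hD : D % 4 = 3) (x y : V) :
    hh.altForm hD (okSqrt D • x) y = hh.altForm hD (okSqrt D • y) x := by
  have hcast : (hh.altForm hD (okSqrt D • x) y : ℂ) = hh.altForm hD (okSqrt D • y) x := by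
    rw [coe_altForm_okSqrt_smul, coe_altForm_okSqrt_smul, add_comm]
  exact_mod_cast hcast

lemma altForm_okSqrt_smul_self (hh : IsSelfDualHermitian D h Q) (hD : D % 4 = 3) (x : V) :
    hh.altForm hD (okSqrt D • x) x = 2 * Q x := by
  have hcast : (hh.altForm hD (okSqrt D • x) x : ℂ) = 2 * Q x := by
    rw [coe_altForm_okSqrt_smul, hh.quad_eq, two_mul]
  exact_mod_cast hcast

lemma exists_altForm_eq (hh : IsSelfDualHermitian D h Q) (hD : D % 4 = 3) (l : V →ₗ[ℤ] ℤ) :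
    ∃ y, ∀ x, hh.altForm hD x y = l x := by
  obtain ⟨φ, hφ⟩ := exists_omegaCoord_comp_eq hD l
  obtain ⟨y, hy⟩ := hh.exists_eq φ
  refine ⟨y, fun x => ?_⟩
  rw [← hφ x, altForm_apply, show φ x = hh.toOk x y from Subtype.ext (hy x)]

variable {ι : Type*} [Fintype ι] [DecidableEq ι]

/-- The Gram matrix of the alternating form `altForm`. -/
def altGram (hh : IsSelfDualHermitian D h Q) (hD : D % 4 = 3) (b : Module.Basis ι ℤ V) :
    Matrix ι ι ℤ :=
  LinearMap.toMatrix₂ b b (hh.altForm hD)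

lemma isUnit_altGram (hh : IsSelfDualHermitian D h Q) (hD : D % 4 = 3) (b : Module.Basis ι ℤ V) :
    IsUnit (hh.altGram hD b) := by
  rw [← mulVec_surjective_iff_isUnit]
  intro v
  obtain ⟨y, hy⟩ := hh.exists_altForm_eq hD (b.constr ℤ v)
  refine ⟨b.equivFun y, funext fun i => ?_⟩
  have hgram := dotProduct_toMatrix₂_mulVec b b (hh.altForm hD)
    (Pi.single i 1) (b.equivFun y)
  simpa [hy, altGram, Function.comp_def] using hgram

end IsSelfDualHermitian

variable {ι : Type*} [Fintype ι] [DecidableEq ι]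

variable (D) in
/-- The matrix of multiplication by `√-D` in a basis over `ℤ`. -/
def sqrtMatrix (b : Module.Basis ι ℤ V) : Matrix ι ι ℤ :=
  LinearMap.toMatrix b b (DistribSMul.toLinearMap ℤ V (okSqrt D))

lemma sqrtMatrix_mul_self (b : Module.Basis ι ℤ V) :
    sqrtMatrix D b * sqrtMatrix D b = -((D : ℤ) • 1) := by
  have hcomp : DistribSMul.toLinearMap ℤ V (okSqrt D) ∘ₗ DistribSMul.toLinearMap ℤ V (okSqrt D) =
      -((D : ℤ) • LinearMap.id) := by
    ext x
    simp only [LinearMap.comp_apply, DistribSMul.toLinearMap_apply, LinearMap.neg_apply,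
      LinearMap.smul_apply, LinearMap.id_apply]
    rw [← mul_smul, okSqrt_mul_self, neg_smul, Int.cast_smul_eq_zsmul]
  rw [sqrtMatrix, ← LinearMap.toMatrix_comp, hcomp, map_neg, map_smul, LinearMap.toMatrix_id]

namespace IsSelfDualHermitian

variable {h : V → V → ℂ} {Q : V → ℤ}

lemma transpose_sqrtMatrix_mul_altGram (hh : IsSelfDualHermitian D h Q) (hD : D % 4 = 3)
    (b : Module.Basis ι ℤ V) :
    (sqrtMatrix D b)ᵀ * hh.altGram hD b =
      LinearMap.toMatrix₂ b b (hh.altForm hD ∘ₗ DistribSMul.toLinearMap ℤ V (okSqrt D)) := by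
  rw [LinearMap.toMatrix₂_comp b b, sqrtMatrix, altGram]

lemma isSymm_transpose_sqrtMatrix_mul_altGram (hh : IsSelfDualHermitian D h Q) (hD : D % 4 = 3)
    (b : Module.Basis ι ℤ V) : ((sqrtMatrix D b)ᵀ * hh.altGram hD b).IsSymm := by
  rw [transpose_sqrtMatrix_mul_altGram]
  refine .ext fun i j => ?_
  simp only [LinearMap.toMatrix₂_apply, LinearMap.comp_apply, DistribSMul.toLinearMap_apply]
  exact hh.altForm_okSqrt_smul_comm hD (b j) (b i)

lemma dotProduct_transpose_sqrtMatrix_mul_altGram_mulVec (hh : IsSelfDualHermitian D h Q)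
    (hD : D % 4 = 3) (b : Module.Basis ι ℤ V) (x : ι → ℤ) :
    x ⬝ᵥ ((sqrtMatrix D b)ᵀ * hh.altGram hD b) *ᵥ x = 2 * Q (b.equivFun.symm x) := by
  rw [transpose_sqrtMatrix_mul_altGram, ← hh.altForm_okSqrt_smul_self hD]
  exact dotProduct_toMatrix₂_mulVec b b
    (hh.altForm hD ∘ₗ DistribSMul.toLinearMap ℤ V (okSqrt D)) x x

/-- The trace form of a self-dual hermitian lattice, as an even lattice of level dividing `D`. -/
def evenLattice (hh : IsSelfDualHermitian D h Q) (hD : D % 4 = 3) (b : Module.Basis ι ℤ V)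
    (hcard : Fintype.card ι = 2 * k) : EvenLattice ι k D :=
  .ofUnimodular (Nat.odd_iff.2 (by lia)) hcard (sqrtMatrix D b) (hh.altGram hD b)
    (sqrtMatrix_mul_self b) (hh.isUnit_altGram hD b)
    (hh.isSymm_transpose_sqrtMatrix_mul_altGram hD b)
    (fun x => by simp [dotProduct_transpose_sqrtMatrix_mul_altGram_mulVec])
    (fun x hx => by
      rw [dotProduct_transpose_sqrtMatrix_mul_altGram_mulVec]
      exact mul_pos two_pos (hh.quad_pos _ (b.equivFun.symm.map_ne_zero_iff.2 hx)))

lemma evenLattice_q (hh : IsSelfDualHermitian D h Q) (hD : D % 4 = 3) (b : Module.Basis ι ℤ V)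
    (hcard : Fintype.card ι = 2 * k) (x : V) :
    (hh.evenLattice hD b hcard).q (b.equivFun x) = Q x := by
  have htwo := (hh.evenLattice hD b hcard).two_mul_q (b.equivFun x)
  have hgram := hh.dotProduct_transpose_sqrtMatrix_mul_altGram_mulVec hD b (b.equivFun x)
  rw [LinearEquiv.symm_apply_apply] at hgram
  exact mul_left_cancel₀ two_ne_zero (htwo.trans hgram)

theorem exists_evenLattice [Module.Finite (Ok D) V] (hh : IsSelfDualHermitian D h Q)
    (hD : D % 4 = 3) (hrank : Module.finrank (Ok D) V = k) :
    ∃ (L : EvenLattice (Fin (2 * k)) k D) (e : V ≃ (Fin (2 * k) → ℤ)), ∀ x, L.q (e x) = Q x := by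
  have : Module.Free ℤ (Ok D) := .of_basis (okBasis hD)
  have : Module.Finite ℤ (Ok D) := .of_basis (okBasis hD)
  have : Module.Finite ℤ V := .trans (Ok D) V
  have := hh.isTorsionFree
  have hfinrank : Module.finrank ℤ V = 2 * k := by
    rw [← finrank_mul_finrank_of_isIntegral ℤ (Ok D) V, hrank,
      Module.finrank_eq_card_basis (okBasis hD), Fintype.card_fin]
  let b : Module.Basis (Fin (2 * k)) ℤ V :=
    (Module.finBasis ℤ V).reindex (finCongr hfinrank)
  exact ⟨hh.evenLattice hD b (Fintype.card_fin _), b.equivFun.toEquiv, hh.evenLattice_q hD b _⟩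

end IsSelfDualHermitian

end SelfDualLattice

section Counting

open Filter

lemma hasSum_comp_finsum_natCard {X β R : Type*} [Semiring R] [TopologicalSpace R]
    (g : X → β) (F : β → R) (hfin : (Function.support fun x => F (g x)).Finite) :
    HasSum (fun x => F (g x)) (∑ᶠ b, F b * Nat.card {x // g x = b}) := by
  classical
  have hsupp : Function.support (fun b => F b * (Nat.card {x // g x = b} : R)) ⊆
      ↑(hfin.toFinset.image g) := by
    intro b hb
    have hcard : Nat.card {x // g x = b} ≠ 0 := fun h => hb (by simp [h])
    obtain ⟨x, hx⟩ := (Nat.card_ne_zero.1 hcard).1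
    simp only [Finset.coe_image, Set.Finite.coe_toFinset]
    exact ⟨x, fun h => hb (by simp_all), hx⟩
  have hsum := hasSum_sum_of_ne_finset_zero (f := fun x => F (g x)) (s := hfin.toFinset)
    (L := .unconditional X) fun x hx => by simpa using hx
  suffices hcount : ∑ᶠ b, F b * (Nat.card {x // g x = b} : R) = ∑ x ∈ hfin.toFinset, F (g x) by
    rwa [hcount]
  rw [finsum_eq_sum_of_support_subset _ hsupp, Finset.sum_comp F g]
  refine Finset.sum_congr rfl fun b hb => ?_
  obtain ⟨y, hy, rfl⟩ := Finset.mem_image.1 hb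
  have hfiber (x : X) : g x = g y ↔ x ∈ hfin.toFinset.filter (g · = g y) := by
    simp only [Finset.mem_filter, hfin.mem_toFinset, Function.mem_support]
      at hy ⊢
    exact ⟨fun h => ⟨h ▸ hy, h⟩, And.right⟩
  rw [Nat.card_congr (Equiv.subtypeEquivRight hfiber), Nat.card_eq_finsetCard, nsmul_eq_mul,
    (Nat.cast_commute _ _).eq]

lemma EvenLattice.finite_setOf_q_le {ι : Type*} [Fintype ι] [DecidableEq ι] {k D : ℕ}
    (L : EvenLattice ι k D) (m : ℤ) : {x : ι → ℤ | L.q x ≤ m}.Finite := by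
  obtain ⟨δ, hδ, hle⟩ := exists_mul_sq_norm_le_quadForm L.posDef_realGram
  have htend : Tendsto (fun x : ι → ℤ => δ * ‖realVec x‖ ^ 2) cofinite atTop :=
    ((tendsto_pow_atTop two_ne_zero).comp tendsto_norm_realVec_cofinite).const_mul_atTop hδ
  refine Set.Finite.subset (htend.eventually_gt_atTop (2 * m : ℝ)) fun x hm hx => ?_
  have hlt := hx.trans_le ((hle _).trans_eq (L.quadForm_realVec x))
  norm_cast at hlt
  exact absurd hm (by simpa using hlt)

lemma hasSum_intCast_mul_comp_neg {X R : Type*} [Ring R] [TopologicalSpace R] {Q : X → ℤ}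
    {c : ℤ → R} (hQ : ∀ x, 0 ≤ Q x) (hfin : ∀ m, {x | Q x ≤ m}.Finite)
    (hc : ∃ m₀ : ℤ, ∀ m : ℤ, m < -m₀ → c m = 0) :
    HasSum (fun x => (Q x : R) * c (-Q x))
      (∑ᶠ m ∈ {m : ℤ | 0 < m}, (m : R) * c (-m) * Nat.card {x // Q x = m}) := by
  obtain ⟨m₀, hm₀⟩ := hc
  have hpos : ∑ᶠ m ∈ {m : ℤ | 0 < m}, (m : R) * c (-m) * Nat.card {x // Q x = m} =
      ∑ᶠ m : ℤ, (m : R) * c (-m) * Nat.card {x // Q x = m} := by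
    rw [finsum_mem_def, Set.indicator_eq_self.2]
    refine fun m hm => lt_of_le_of_ne (a := (0 : ℤ)) ?_ (Ne.symm ?_)
    · by_contra! hneg
      have : IsEmpty {x // Q x = m} := ⟨fun x => (hQ x).not_gt (x.2.trans_lt hneg)⟩
      simp at hm
    · rintro rfl
      simp at hm
  rw [hpos]
  refine hasSum_comp_finsum_natCard Q (fun m => (m : R) * c (-m)) ((hfin m₀).subset fun x hx => ?_)
  by_contra! hlt
  exact hx (by simp [hm₀ (-Q x) (by simpa using hlt)])

end Counting

/-- The rational number `mult(f) = (1/(n-2)) ∑_{m>0} m ⬝ c(-m) ⬝ #{x ∈ L₀ : Q(x) = m}`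
is an integer. -/
theorem mult_of_f_integral
    (D : ℕ) (hD : Odd D) (hDsf : Squarefree D) (hD4 : D % 4 = 3)
    (n : ℕ) (hn : 3 ≤ n)
    -- the self-dual positive definite hermitian O_k-lattice (L₀, h) of rank n-2
    (L₀ : Type*) [AddCommGroup L₀] [Module (Ok D) L₀]
    [Module.Finite (Ok D) L₀] [Module.Projective (Ok D) L₀]
    (hrank : Module.rank (Ok D) L₀ = ((n - 2 : ℕ) : Cardinal))
    (h : L₀ → L₀ → ℂ)
    (hvals : ∀ x y : L₀, h x y ∈ Ok D)
    (hadd : ∀ x x' y : L₀, h (x + x') y = h x y + h x' y)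
    (hsmul : ∀ (a : Ok D) (x y : L₀), h (a • x) y = (a : ℂ) * h x y)
    (hherm : ∀ x y : L₀, h y x = (starRingEnd ℂ) (h x y))
    (Q : L₀ → ℤ) (hQ : ∀ x : L₀, (Q x : ℂ) = h x x)
    (hposdef : ∀ x : L₀, x ≠ 0 → 0 < Q x)
    (hselfdual : ∀ φ : L₀ →ₗ[Ok D] Ok D, ∃! y : L₀, ∀ x : L₀, (φ x : ℂ) = h x y)
    -- the weakly holomorphic modular form f ∈ M^{!,∞}_{2-n}(D, χ_k^{n-2}),
    -- with integral Fourier coefficients c(m) for m ≤ 0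
    (f : ℂ → ℂ) (c : ℤ → ℂ)
    (hf : IsWeaklyHolInfty D (fun a => ((chiK D a : ℤ) : ℂ) ^ (n - 2)) (2 - (n : ℤ)) f c)
    (hcint : ∀ m : ℤ, m ≤ 0 → ∃ z : ℤ, c m = (z : ℂ)) :
    ∃ z : ℤ,
      (∑ᶠ m ∈ {m : ℤ | 0 < m}, (m : ℂ) * c (-m) * (Nat.card {x : L₀ // Q x = m} : ℂ))
          / ((n : ℂ) - 2) = (z : ℂ) := by
  obtain ⟨k, rfl⟩ : ∃ k, n = k + 2 := ⟨n - 2, by lia⟩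
  rw [Nat.add_sub_cancel] at hf hrank
  rw [show 2 - ((k + 2 : ℕ) : ℤ) = -(k : ℤ) by push_cast; ring] at hf
  rw [show ((k + 2 : ℕ) : ℂ) - 2 = k by push_cast; ring]
  have hk : k ≠ 0 := by lia
  have hh : IsSelfDualHermitian D h Q :=
    ⟨hvals, hadd, hsmul, hherm, hQ, hposdef, fun φ => (hselfdual φ).exists⟩
  obtain ⟨L, e, he⟩ := hh.exists_evenLattice hD4 (Module.finrank_eq_of_rank_eq hrank)
  have hcount := hasSum_intCast_mul_comp_neg (fun x => he x ▸ L.q_nonneg (e x))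
    (fun m => by simpa [he] using (L.finite_setOf_q_le m).preimage e.injective.injOn)
    hf.coeff_bddBelow
  refine L.exists_eq_intCast_of_hasSum hk hD4 hDsf hf hcint ?_
  rw [mul_div_cancel₀ _ (Nat.cast_ne_zero.2 hk)]
  exact e.hasSum_iff.1 (by simpa only [Function.comp_def, he] using hcount)
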